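/- arXiv:2411.15107 — 2 statements merged into one kernel-verified Lean document; each statement's English description precedes it below -/
import Mathlib

section
/- If G is a Carnot group equipped with its Carnot–Carathéodory metric d_cc, then the Lipschitz-free space F(G) has property (V*). -/
open Filter Topology Metric Set

noncomputable section

/-- A formal series `∑ yₙ` in a normed space `Y` is weakly unconditionally Cauchy (WUC)
if `∑ |⟨φ, yₙ⟩| < ∞` for every continuous linear functional `φ` on `Y`. -/
def IsWUC {Y : Type*} [SeminormedAddCommGroup Y] [NormedSpace ℝ Y] (y : ℕ → Y) : Prop :=
  ∀ φ : Y →L[ℝ] ℝ, Summable fun n => |φ (y n)|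

/-- `Γ` is a (V*)-set in `X`: for every WUC series `∑ fₙ` in the dual `X*`,
`sup_{x ∈ Γ} |⟨x, fₙ⟩| → 0`. -/
def IsVStarSet {X : Type*} [SeminormedAddCommGroup X] [NormedSpace ℝ X] (Γ : Set X) : Prop :=
  ∀ f : ℕ → (X →L[ℝ] ℝ), IsWUC f →
    ∀ ε > (0 : ℝ), ∀ᶠ n in atTop, ∀ x ∈ Γ, |f n x| ≤ ε

/-- `Γ` is relatively weakly compact: its closure in the weak topology is compact. -/
def RelWeaklyCompact {X : Type*} [SeminormedAddCommGroup X] [NormedSpace ℝ X]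
    (Γ : Set X) : Prop :=
  IsCompact (closure ((toWeakSpace ℝ X) '' Γ))

/-- A normed space has Pełczyński's property (V*) if every (V*)-set is relatively
weakly compact. -/
def HasPropertyVStar (X : Type*) [SeminormedAddCommGroup X] [NormedSpace ℝ X] : Prop :=
  ∀ Γ : Set X, IsVStarSet Γ → RelWeaklyCompact Γ

/-- `F`, together with the map `δ : M → F`, is (a realization of) the Lipschitz-free space
over the pointed metric space `(M, o)`: `δ` is a base-point-preserving isometric embedding
whose range has dense linear span, and every Lipschitz function `f : M → ℝ` vanishing at
the base point lifts to a continuous linear functional of norm at most `Lip(f)` (this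
characterizes `F(M)`, with dual `Lip₀(M)`, up to isometric isomorphism). -/
structure IsLipschitzFree {M : Type*} [MetricSpace M] (o : M)
    {F : Type*} [NormedAddCommGroup F] [NormedSpace ℝ F] (δ : M → F) : Prop where
  isometry : Isometry δ
  map_base : δ o = 0
  dense_span : Dense (Submodule.span ℝ (Set.range δ) : Set F)
  lift : ∀ (L : NNReal) (f : M → ℝ), LipschitzWith L f → f o = 0 →
    ∃ φ : F →L[ℝ] ℝ, ‖φ‖ ≤ L ∧ ∀ x, φ (δ x) = f x

/-- The subspace of `F` corresponding to the Lipschitz-free space `F(S)` over a subset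
`S ⊆ M`: the closed linear span of `δ(S)`. -/
def freeSpan {M : Type*} [MetricSpace M] {F : Type*} [NormedAddCommGroup F]
    [NormedSpace ℝ F] (δ : M → F) (S : Set M) : Submodule ℝ F :=
  (Submodule.span ℝ (δ '' S)).topologicalClosure

theorem mem_freeSpan {M : Type*} [MetricSpace M] {F : Type*} [NormedAddCommGroup F]
    [NormedSpace ℝ F] (δ : M → F) {S : Set M} {x : M} (hx : x ∈ S) :
    δ x ∈ freeSpan δ S :=
  (Submodule.span ℝ (δ '' S)).le_topologicalClosure
    (Submodule.subset_span ⟨x, hx, rfl⟩)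

/-- Euclidean space `ℝ^d`. -/
abbrev Euc (d : ℕ) := EuclideanSpace ℝ (Fin d)

/-- The data of a Carnot–Carathéodory space: an open connected set `G ⊆ ℝ^d` together
with a family `X = (X₁, …, X_s)` of vector fields on `G` with locally Lipschitz
coefficients. -/
structure CCData (d s : ℕ) where
  /-- the underlying open connected subset of `ℝ^d` -/
  G : Set (Euc d)
  /-- the family of vector fields -/
  X : Fin s → Euc d → Euc d
  isOpen_G : IsOpen G
  isConnected_G : IsConnected G
  locallyLipschitz_X : ∀ j : Fin s, ∀ x ∈ G, ∃ U ∈ 𝓝 x, ∃ K : NNReal,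
    LipschitzOnWith K (X j) U

/-- A curve `γ` on `[0, b]` is admissible (w.r.t. the vector fields of `S`) if it stays
in `G`, and it is absolutely continuous with derivative `γ'(t) = ∑ⱼ cⱼ(t) Xⱼ(γ(t))`
a.e., for Borel functions `cⱼ` with `∑ⱼ cⱼ(t)² ≤ 1`.  (Absolute continuity is expressed
by `γ` being the indefinite integral of an integrable function.) -/
def CCData.Admissible {d s : ℕ} (S : CCData d s) (b : ℝ) (γ : ℝ → Euc d) : Prop :=
  0 ≤ b ∧ (∀ t ∈ Set.Icc (0 : ℝ) b, γ t ∈ S.G) ∧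
  ∃ c : Fin s → ℝ → ℝ,
    (∀ j, Measurable (c j)) ∧
    (∀ t ∈ Set.Icc (0 : ℝ) b, ∑ j, (c j t) ^ 2 ≤ 1) ∧
    MeasureTheory.IntegrableOn (fun t => ∑ j, c j t • S.X j (γ t)) (Set.Icc (0 : ℝ) b) ∧
    ∀ t ∈ Set.Icc (0 : ℝ) b, γ t = γ 0 + ∫ u in (0 : ℝ)..t, ∑ j, c j u • S.X j (γ u)

/-- The Carnot–Carathéodory distance associated with the vector fields of `S`:
the infimum of `b ≥ 0` such that an admissible curve joins `x` to `y` in time `b`. -/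
def CCData.ccDist {d s : ℕ} (S : CCData d s) (x y : Euc d) : ℝ :=
  sInf {b | ∃ γ : ℝ → Euc d, S.Admissible b γ ∧ γ 0 = x ∧ γ b = y}

/-- Every two points of `G` are joined by an admissible curve, so that `d_cc` is
finite everywhere (`(G, d_cc)` is a Carnot–Carathéodory metric space). -/
def CCData.Connects {d s : ℕ} (S : CCData d s) : Prop :=
  ∀ x ∈ S.G, ∀ y ∈ S.G, ∃ b γ, S.Admissible b γ ∧ γ 0 = x ∧ γ b = y

/-- Condition (◇) with exponent `α`: for every bounded `K ⊆ G` there are constants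
`C₁, C₂ > 0` with `C₁‖x − y‖₂ ≤ d_cc(x, y) ≤ C₂‖x − y‖₂^α` for all `x, y ∈ K`. -/
def CCData.Diamond {d s : ℕ} (S : CCData d s) (α : ℝ) : Prop :=
  ∀ K : Set (Euc d), K ⊆ S.G → Bornology.IsBounded K →
    ∃ C₁ > (0 : ℝ), ∃ C₂ > (0 : ℝ), ∀ x ∈ K, ∀ y ∈ K,
      C₁ * ‖x - y‖ ≤ S.ccDist x y ∧ S.ccDist x y ≤ C₂ * ‖x - y‖ ^ α

/-- The pointed metric space `M` is (a realization of) the metric space `(G, d_cc)`: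
`ι` is a bijection of `M` onto `G` and the metric of `M` corresponds to `d_cc`. -/
structure CCRepresentation {d s : ℕ} (S : CCData d s) (M : Type*) [MetricSpace M]
    (ι : M → Euc d) : Prop where
  injective : Function.Injective ι
  range_eq : Set.range ι = S.G
  dist_eq : ∀ x y : M, dist x y = S.ccDist (ι x) (ι y)
/-- A Lie group structure on `ℝ^d` (in global coordinates): a group structure whose
operations are smooth.  Since the underlying space is `ℝ^d`, the group is automatically
connected and simply connected. -/
structure LieGroupData (d : ℕ) where
  /-- group multiplication -/
  mul : Euc d → Euc d → Euc d
  /-- neutral element -/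
  one : Euc d
  /-- group inversion -/
  inv : Euc d → Euc d
  mul_assoc : ∀ a b c, mul (mul a b) c = mul a (mul b c)
  one_mul : ∀ a, mul one a = a
  mul_one : ∀ a, mul a one = a
  inv_mul : ∀ a, mul (inv a) a = one
  smooth_mul : ContDiff ℝ (⊤ : ℕ∞) fun p : Euc d × Euc d => mul p.1 p.2
  smooth_inv : ContDiff ℝ (⊤ : ℕ∞) inv

/-- The left-invariant vector field on the group determined by the tangent vector `v`
at the identity: `x ↦ D(Lₓ)(1)[v]`, where `Lₓ` is the left translation by `x`. -/
def LieGroupData.lvf {d : ℕ} (Gd : LieGroupData d) (v : Euc d) : Euc d → Euc d :=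
  fun x => fderiv ℝ (Gd.mul x) Gd.one v

/-- The Lie bracket of two vector fields on `ℝ^d`:
`[V, W](x) = DW(x)[V(x)] − DV(x)[W(x)]`. -/
def vfBracket {d : ℕ} (V W : Euc d → Euc d) : Euc d → Euc d :=
  fun x => fderiv ℝ W x (V x) - fderiv ℝ V x (W x)

/-- The Lie bracket on the Lie algebra of the group (identified with `ℝ^d`):
the bracket of the associated left-invariant vector fields, evaluated at the identity. -/
def LieGroupData.bracket {d : ℕ} (Gd : LieGroupData d) (v w : Euc d) : Euc d :=
  vfBracket (Gd.lvf v) (Gd.lvf w) Gd.one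

/-- `[A, B]`: the linear span of all brackets of elements of `A` and `B`. -/
def LieGroupData.bracketSpan {d : ℕ} (Gd : LieGroupData d)
    (A B : Submodule ℝ (Euc d)) : Submodule ℝ (Euc d) :=
  Submodule.span ℝ {z | ∃ a ∈ A, ∃ b ∈ B, z = Gd.bracket a b}

/-- A stratification `g = V₁ ⊕ ⋯ ⊕ Vₙ` of the Lie algebra of the group, with
`[V₁, Vᵢ] = Vᵢ₊₁` for `i < n` and `[V₁, Vₙ] = 0`.  A Lie group of this kind is a
Carnot group. -/
structure LieGroupData.Stratification {d : ℕ} (Gd : LieGroupData d) (n : ℕ) where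
  npos : 0 < n
  /-- the strata `V₁, …, Vₙ` (zero-indexed) -/
  V : Fin n → Submodule ℝ (Euc d)
  isInternal : DirectSum.IsInternal V
  bracket_succ : ∀ i : Fin n, ∀ h : (i : ℕ) + 1 < n,
    Gd.bracketSpan (V ⟨0, npos⟩) (V i) = V ⟨(i : ℕ) + 1, h⟩
  bracket_last : Gd.bracketSpan (V ⟨0, npos⟩) (V ⟨n - 1, by omega⟩) = ⊥

/-!
Suppose that a (V*)-set `Γ ⊆ F(M)` is not relatively weakly compact, and let `Λ` be a weak-*
cluster point of `Γ` in the bidual, at distance more than `c` from `F(M)`. One builds smooth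
functionals `ψ₀, ψ₁, …` with `∑ₖ |∇ψₖ| ≤ 2` everywhere on `M`, so that `∑ₖ ψₖ` is weakly
unconditionally Cauchy, each of which is at least `c / 8` somewhere on `Γ`; this contradicts the
(V*) property of `Γ`.

A point `γ` of `Γ` is nearly a finite sum of molecules, so `|Φ(γ)|` is controlled by `μ_γ(h)` for
every Hajłasz gradient `h` of `Φ`, where `μ_γ` is a positive functional of bounded mass. The
energies `μ_γ(⟨∇φ, ∇ψ⟩)` have a limit `B` along an ultrafilter witnessing `Λ`. Since `Λ` is far
from `F(M)`, there are functionals `φₘ` and points `γₙ` with `φₘ(γₙ)` large for `m ≤ n` and zero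
for `n < m`; positivity of `B` forces some difference `φ` of convex combinations of successive
blocks to have small energy, while `φ` is still large at a point of `Γ`. Thus `|∇φ| ≤ 1` and
`|∇φ|` is small in the mean.

To add `φ` to the functionals already built, subtract from `2 φ`, roughly, the product `h φ`,
where the bump `h` approximates `∑ₖ |∇ψₖ|`: the gradient becomes about `(2 - h) ∇φ`, which leaves
room for `h`. The product rule error `φ ∇h` is negligible because `φ` is made small on a finite
net of the support of `h`, and `(h φ)(γ)` is negligible because `μ_γ(h)` is small.

On a Carnot group `∇` is the horizontal gradient. It computes the Lipschitz constant, and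
Lipschitz functions are smoothed without increasing this constant by averaging their left
translates.
-/

/-! ### Weakly unconditionally Cauchy series and (V*)-sets -/

theorem IsWUC.of_summable_norm {Y : Type*} [SeminormedAddCommGroup Y] [NormedSpace ℝ Y]
    {y : ℕ → Y} (hy : Summable fun n => ‖y n‖) : IsWUC y := fun φ =>
  Summable.of_nonneg_of_le (fun _ => abs_nonneg _) (fun n => φ.le_opNorm (y n)) (hy.mul_left ‖φ‖)

theorem IsWUC.of_norm_sum_smul_le {Y : Type*} [SeminormedAddCommGroup Y] [NormedSpace ℝ Y]
    {y : ℕ → Y} {C : ℝ}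
    (hy : ∀ (n : ℕ) (ε : ℕ → ℝ), (∀ k, |ε k| ≤ 1) → ‖∑ k ∈ Finset.range n, ε k • y k‖ ≤ C) :
    IsWUC y := by
  intro φ
  refine summable_of_sum_range_le (c := ‖φ‖ * C) (fun _ => abs_nonneg _) fun n => ?_
  let ε : ℕ → ℝ := fun k => SignType.sign (φ (y k))
  have hε : ∀ k, |ε k| ≤ 1 := fun k => by
    rcases lt_trichotomy (φ (y k)) 0 with h | h | h <;> simp [ε, h]
  calc ∑ k ∈ Finset.range n, |φ (y k)| = φ (∑ k ∈ Finset.range n, ε k • y k) := by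
        simp [ε, map_sum]
    _ ≤ ‖φ‖ * ‖∑ k ∈ Finset.range n, ε k • y k‖ := (le_abs_self _).trans (φ.le_opNorm _)
    _ ≤ ‖φ‖ * C := by gcongr; exact hy n ε hε

theorem IsVStarSet.isBounded {X : Type*} [NormedAddCommGroup X] [NormedSpace ℝ X] {Γ : Set X}
    (hΓ : IsVStarSet Γ) : Bornology.IsBounded Γ := by
  have pointwise (φ : StrongDual ℝ X) : ∃ C : ℝ, ∀ x : Γ,
      ‖NormedSpace.inclusionInDoubleDual ℝ X (x : X) φ‖ ≤ C := by
    have hwuc : IsWUC fun n : ℕ => ((1 / 2 : ℝ) ^ n) • φ := IsWUC.of_summable_norm <| by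
      simpa [norm_smul] using summable_geometric_two.mul_right ‖φ‖
    obtain ⟨n, hn⟩ := (hΓ _ hwuc 1 one_pos).exists
    refine ⟨2 ^ n, fun x => ?_⟩
    have hx := hn x x.2
    rw [smul_apply, smul_eq_mul, abs_mul, abs_of_nonneg (by positivity), one_div, inv_pow,
      inv_mul_le_iff₀ (by positivity), mul_one] at hx
    exact hx
  obtain ⟨C, hC⟩ := banach_steinhaus pointwise
  refine isBounded_iff_forall_norm_le.2 ⟨C, fun x hx => ?_⟩
  exact ((NormedSpace.inclusionInDoubleDualLi ℝ (E := X)).norm_map x).ge.trans (hC ⟨x, hx⟩)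

/-! ### Elements of the bidual away from the space -/

theorem exists_mem_span_norm_sub_le {X : Type*} [NormedAddCommGroup X] [NormedSpace ℝ X]
    {ι : Type*} [Finite ι] (L : ι → StrongDual ℝ X) (Λ : StrongDual ℝ X) {c : ℝ}
    (hΛ : ∀ x, ‖x‖ ≤ 1 → (∀ i, L i x = 0) → Λ x ≤ c) :
    ∃ Θ ∈ Submodule.span ℝ (Set.range L), ‖Λ - Θ‖ ≤ c := by
  let W : Submodule ℝ X := ⨅ i, (L i).toLinearMap.ker
  have hW (x : W) (i : ι) : L i x = 0 := (Submodule.mem_iInf _).1 x.2 i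
  have norm_restrict_le : ‖Λ.comp W.subtypeL‖ ≤ c := by
    have hc : 0 ≤ c := by simpa using hΛ 0 (by simp) (by simp)
    refine ContinuousLinearMap.opNorm_le_of_unit_norm hc fun x hx => abs_le.2 ⟨?_, ?_⟩
    · have := hΛ (-x : W) (by simpa using hx.le) (hW (-x))
      rw [Submodule.coe_neg, map_neg] at this
      exact neg_le.1 this
    · exact hΛ x hx.le (hW x)
  obtain ⟨Ψ, hΨ, hΨ_norm⟩ := exists_extension_norm_eq W (Λ.comp W.subtypeL)
  have hker : W ≤ (Λ - Ψ).toLinearMap.ker := fun x hx => by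
    simpa [sub_eq_zero] using (hΨ ⟨x, hx⟩).symm
  have hspan : (Λ - Ψ).toLinearMap ∈
      (Submodule.span ℝ (Set.range L)).map (ContinuousLinearMap.coeLM ℝ) := by
    rw [Submodule.map_span, ← Set.range_comp]
    exact mem_span_of_iInf_ker_le_ker hker
  obtain ⟨Θ, hΘ, hΘ_eq⟩ := hspan
  have hΘ_eq : Θ = Λ - Ψ := ContinuousLinearMap.coe_injective hΘ_eq
  exact ⟨Θ, hΘ, by rw [hΘ_eq, sub_sub_cancel, hΨ_norm]; exact norm_restrict_le⟩

section Bidual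

variable {F : Type*} [NormedAddCommGroup F] [NormedSpace ℝ F]

theorem exists_norm_le_one_forall_eq_zero_lt {Λ : StrongDual ℝ (StrongDual ℝ F)} {c : ℝ}
    (hΛ : ∀ γ : F, c < ‖Λ - NormedSpace.inclusionInDoubleDual ℝ F γ‖) (A : Finset F) :
    ∃ φ : StrongDual ℝ F, ‖φ‖ ≤ 1 ∧ (∀ γ ∈ A, φ γ = 0) ∧ c < Λ φ := by
  by_contra! hcon
  obtain ⟨Θ, hΘ, hΛΘ⟩ := exists_mem_span_norm_sub_le
    (fun γ : A => NormedSpace.inclusionInDoubleDual ℝ F γ) Λ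
    fun φ hφ hφA => hcon φ hφ fun γ hγ => hφA ⟨γ, hγ⟩
  have hrange : Θ ∈ LinearMap.range (NormedSpace.inclusionInDoubleDual ℝ F).toLinearMap :=
    Submodule.span_le.2 (by rintro _ ⟨γ, rfl⟩; exact ⟨γ, rfl⟩) hΘ
  obtain ⟨γ, rfl⟩ := hrange
  exact (hΛ γ).not_ge hΛΘ

theorem exists_bidual_of_not_relWeaklyCompact [CompleteSpace F] {Γ : Set F}
    (hΓ : Bornology.IsBounded Γ) (hcpt : ¬ RelWeaklyCompact Γ) :
    ∃ (Λ : StrongDual ℝ (StrongDual ℝ F)) (c : ℝ) (𝒰 : Ultrafilter Γ), 0 < c ∧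
      (∀ γ : F, c < ‖Λ - NormedSpace.inclusionInDoubleDual ℝ F γ‖) ∧
      ∀ φ : StrongDual ℝ F, Tendsto (fun γ : Γ => φ γ) 𝒰 (𝓝 (Λ φ)) := by
  let j : F → WeakDual ℝ (StrongDual ℝ F) := fun x =>
    NormedSpace.inclusionInDoubleDualWeak ℝ F (toWeakSpace ℝ F x)
  let R := Set.range (NormedSpace.inclusionInDoubleDualLi ℝ (E := F))
  have hR : IsClosed R :=
    ((NormedSpace.inclusionInDoubleDualLi ℝ (E := F)).isometry.isUniformInducing
      |>.isComplete_range).isClosed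
  obtain ⟨Λ, hΛ_mem, hΛ_not⟩ : ∃ Λ ∈ closure (j '' Γ), WeakDual.toStrongDual Λ ∉ R := by
    by_contra! hsub
    refine hcpt (NormedSpace.isCompact_closure_of_isBounded (𝕜 := ℝ) (X := F) _ ?_ fun Λ hΛ => ?_)
    · rwa [(toWeakSpace ℝ F).injective.preimage_image]
    · rw [Set.image_image] at hΛ
      obtain ⟨x, hx⟩ := hsub Λ hΛ
      exact ⟨toWeakSpace ℝ F x, WeakDual.toStrongDual.injective hx⟩
  have : NeBot (comap (fun γ : Γ => j γ) (𝓝 Λ)) := by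
    refine comap_neBot fun t ht => ?_
    obtain ⟨_, hxt, x, hx, rfl⟩ := mem_closure_iff_nhds.1 hΛ_mem t ht
    exact ⟨⟨x, hx⟩, hxt⟩
  have hdist := (hR.notMem_iff_infDist_pos (Set.range_nonempty _)).1 hΛ_not
  refine ⟨WeakDual.toStrongDual Λ, infDist (WeakDual.toStrongDual Λ) R / 2,
    Ultrafilter.of (comap (fun γ : Γ => j γ) (𝓝 Λ)), half_pos hdist, fun γ => ?_, fun φ => ?_⟩
  · refine (half_lt_self hdist).trans_le
      ((infDist_le_dist_of_mem (Set.mem_range_self γ)).trans_eq ?_)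
    exact dist_eq_norm (E := StrongDual ℝ (StrongDual ℝ F)) _ _
  · exact ((WeakDual.eval_continuous φ).tendsto Λ).comp
      (tendsto_comap.mono_left (Ultrafilter.of_le _))

end Bidual

/-! ### Small convex differences for a positive form -/

section PositiveForm

variable {E : Type*} [AddCommGroup E] [Module ℝ E] (B : E →ₗ[ℝ] E →ₗ[ℝ] ℝ)

theorem apply_half_smul_add_half_smul_self (u v : E) :
    B ((1 / 2 : ℝ) • u + (1 / 2 : ℝ) • v) ((1 / 2 : ℝ) • u + (1 / 2 : ℝ) • v) =
      (B u u + B v v) / 2 - B (u - v) (u - v) / 4 := by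
  simp only [map_add, map_sub, map_smul, LinearMap.add_apply, LinearMap.sub_apply,
    LinearMap.smul_apply, smul_eq_mul]
  ring

theorem exists_mem_convexHull_apply_self_le {h : ℕ → E} {C ε : ℝ} (hC : ∀ m, B (h m) (h m) ≤ C)
    {N : ℕ} (hsep : ∀ n < N, ∀ u ∈ convexHull ℝ (h '' Iic n), ∀ v ∈ convexHull ℝ (h '' Ioi n),
      ε ≤ B (u - v) (u - v)) (K a : ℕ) (haN : a + 2 ^ K ≤ N) :
    ∃ w ∈ convexHull ℝ (h '' Ico a (a + 2 ^ K)), B w w ≤ C - K * (ε / 4) := by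
  induction K generalizing a with
  | zero => exact ⟨h a, subset_convexHull ℝ _ ⟨a, by simp, rfl⟩, by simpa using hC a⟩
  | succ K ih =>
    rw [pow_succ, mul_two, ← add_assoc] at haN ⊢
    obtain ⟨u, hu, hBu⟩ := ih a (by lia)
    obtain ⟨v, hv, hBv⟩ := ih (a + 2 ^ K) haN
    have mem_of_subset {I : Set ℕ} (hI : I ⊆ Ico a (a + 2 ^ K + 2 ^ K)) {w : E}
        (hw : w ∈ convexHull ℝ (h '' I)) :
        w ∈ convexHull ℝ (h '' Ico a (a + 2 ^ K + 2 ^ K)) :=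
      convexHull_mono (image_mono hI) hw
    have hpos : 0 < 2 ^ K := by positivity
    have hBuv := hsep (a + 2 ^ K - 1) (by lia) u
      (convexHull_mono (image_mono fun m hm => by simp only [mem_Ico, mem_Iic] at *; lia) hu) v
      (convexHull_mono (image_mono fun m hm => by simp only [mem_Ico, mem_Ioi] at *; lia) hv)
    refine ⟨(1 / 2 : ℝ) • u + (1 / 2 : ℝ) • v, convex_convexHull ℝ _
      (mem_of_subset (Ico_subset_Ico_right (by lia)) hu)
      (mem_of_subset (Ico_subset_Ico_left (by lia)) hv)
      (by norm_num) (by norm_num) (by norm_num), ?_⟩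
    rw [apply_half_smul_add_half_smul_self]
    push_cast
    linarith

theorem exists_convexHull_apply_sub_self_lt (hB : ∀ x, 0 ≤ B x x) {h : ℕ → E} {C ε : ℝ}
    (hC : ∀ m, B (h m) (h m) ≤ C) {K : ℕ} (hK : C < K * (ε / 4)) :
    ∃ n < 2 ^ K, ∃ u ∈ convexHull ℝ (h '' Iic n), ∃ v ∈ convexHull ℝ (h '' Ioi n),
      B (u - v) (u - v) < ε := by
  by_contra! hsep
  obtain ⟨w, -, hw⟩ := exists_mem_convexHull_apply_self_le B hC hsep K 0 (by simp)
  linarith [hB w]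

end PositiveForm

section SmallForm

variable {F : Type*} [NormedAddCommGroup F] [NormedSpace ℝ F]
  {Λ : StrongDual ℝ (StrongDual ℝ F)} {c : ℝ}
  {ι : Type*} {l : Filter ι} [NeBot l] {γ : ι → F}

theorem exists_seq_triangular (hΛ : ∀ γ : F, c < ‖Λ - NormedSpace.inclusionInDoubleDual ℝ F γ‖)
    (hγ : ∀ φ : StrongDual ℝ F, Tendsto (fun i => φ (γ i)) l (𝓝 (Λ φ))) {A : Set ι} (hA : A ∈ l) :
    ∃ (φ : ℕ → StrongDual ℝ F) (i : ℕ → ι), (∀ m, ‖φ m‖ ≤ 1) ∧ (∀ n, i n ∈ A) ∧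
      (∀ m n, m ≤ n → c ≤ φ m (γ (i n))) ∧ ∀ m n, n < m → φ m (γ (i n)) = 0 := by
  classical
  obtain ⟨q, hq, hqq⟩ := exists_seq_of_forall_finset_exists
    (fun q : StrongDual ℝ F × ι => ‖q.1‖ ≤ 1 ∧ q.2 ∈ A ∧ c < Λ q.1 ∧ c ≤ q.1 (γ q.2))
    (fun q q' => q'.1 (γ q.2) = 0 ∧ c ≤ q.1 (γ q'.2)) fun s hs => by
      obtain ⟨φ, hφ, hφ_zero, hφ_lt⟩ := exists_norm_le_one_forall_eq_zero_lt hΛ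
        (s.image fun q => γ q.2)
      have eventually_le {ψ : StrongDual ℝ F} (hψ : c < Λ ψ) : ∀ᶠ i in l, c ≤ ψ (γ i) :=
        ((hγ ψ).eventually (lt_mem_nhds hψ)).mono fun _ => le_of_lt
      have hs_le : ∀ᶠ i in l, ∀ q ∈ s, c ≤ q.1 (γ i) :=
        (eventually_all_finset s).2 fun q hq => eventually_le (hs q hq).2.2.1
      obtain ⟨i, hi, his, hiA⟩ := ((eventually_le hφ_lt).and (hs_le.and hA)).exists
      exact ⟨(φ, i), ⟨hφ, hiA, hφ_lt, hi⟩,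
        fun q hq => ⟨hφ_zero _ (Finset.mem_image_of_mem (fun q => γ q.2) hq), his q hq⟩⟩
  refine ⟨fun m => (q m).1, fun n => (q n).2, fun m => (hq m).1, fun n => (hq n).2.1,
    fun m n hmn => ?_, fun m n hnm => (hqq n m hnm).1⟩
  rcases hmn.eq_or_lt with rfl | hmn
  · exact (hq m).2.2.2
  · exact (hqq m n hmn).2

/-- Differences of successive convex blocks stay large at a point of the triangular system, while
positivity and boundedness of `B` force one of them to be small for `B`. -/
theorem exists_apply_self_le_of_bidual (hc : 0 < c)
    (hΛ : ∀ γ : F, c < ‖Λ - NormedSpace.inclusionInDoubleDual ℝ F γ‖)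
    (hγ : ∀ φ : StrongDual ℝ F, Tendsto (fun i => φ (γ i)) l (𝓝 (Λ φ)))
    {E : Submodule ℝ (StrongDual ℝ F)} {U : Set E} (hU : Convex ℝ U) (hU_neg : ∀ u ∈ U, -u ∈ U)
    (hU_dense : ∀ φ : StrongDual ℝ F, ‖φ‖ ≤ 1 → ∀ A : Finset F, ∀ η > (0 : ℝ),
      ∃ ψ ∈ U, ∀ x ∈ A, |(ψ : StrongDual ℝ F) x - φ x| ≤ η)
    (B : E →ₗ[ℝ] E →ₗ[ℝ] ℝ) (hB : ∀ x, 0 ≤ B x x) {C : ℝ} (hBC : ∀ u ∈ U, B u u ≤ C)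
    {A : Set ι} (hA : A ∈ l) {ε : ℝ} (hε : 0 < ε) :
    ∃ φ ∈ U, B φ φ ≤ ε ∧ ∃ i ∈ A, c / 4 ≤ (φ : StrongDual ℝ F) (γ i) := by
  classical
  obtain ⟨φ, i, hφ, hi, hφ_large, hφ_zero⟩ := exists_seq_triangular hΛ hγ hA
  let x : ℕ → F := fun n => γ (i n)
  obtain ⟨K, hK⟩ : ∃ K : ℕ, C / (ε / 4) < K := exists_nat_gt _
  choose ψ hψU hψφ using fun m => hU_dense (φ m) (hφ m) ((Finset.range (2 ^ K)).image x) (c / 4)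
    (by positivity)
  have hψx {n : ℕ} (hn : n < 2 ^ K) (m : ℕ) : |(ψ m : StrongDual ℝ F) (x n) - φ m (x n)| ≤ c / 4 :=
    hψφ m _ (Finset.mem_image_of_mem _ (Finset.mem_range.2 hn))
  obtain ⟨n, hn, u, hu, v, hv, hBuv⟩ := exists_convexHull_apply_sub_self_lt B hB (h := ψ)
    (fun m => hBC _ (hψU m)) ((div_lt_iff₀ (by positivity)).1 hK)
  have hullU (I : Set ℕ) : convexHull ℝ (ψ '' I) ⊆ U :=
    convexHull_min (by rintro _ ⟨m, -, rfl⟩; exact hψU m) hU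
  let ev : E →ₗ[ℝ] ℝ := (NormedSpace.inclusionInDoubleDual ℝ F (x n)).toLinearMap ∘ₗ E.subtype
  have hu_large : u ∈ {w | 3 * c / 4 ≤ ev w} := by
    refine convexHull_min ?_ (convex_halfSpace_ge ev.isLinear _) hu
    rintro _ ⟨m, hm, rfl⟩
    change 3 * c / 4 ≤ (ψ m : StrongDual ℝ F) (x n)
    linarith [(abs_le.1 (hψx hn m)).1, hφ_large m n hm]
  have hv_small : v ∈ {w | ev w ≤ c / 4} := by
    refine convexHull_min ?_ (convex_halfSpace_le ev.isLinear _) hv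
    rintro _ ⟨m, hm, rfl⟩
    change (ψ m : StrongDual ℝ F) (x n) ≤ c / 4
    linarith [(abs_le.1 (hψx hn m)).2, hφ_zero m n hm]
  refine ⟨(1 / 2 : ℝ) • (u - v), ?_, ?_, i n, hi n, ?_⟩
  · rw [show (1 / 2 : ℝ) • (u - v) = (1 / 2 : ℝ) • u + (1 / 2 : ℝ) • -v by module]
    exact hU (hullU _ hu) (hU_neg v (hullU _ hv)) (by norm_num) (by norm_num) (by norm_num)
  · rw [map_smul, map_smul, LinearMap.smul_apply, smul_eq_mul, smul_eq_mul]
    linarith [hB (u - v)]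
  · rw [Submodule.coe_smul, Submodule.coe_sub, smul_apply, sub_apply, smul_eq_mul]
    linarith [show 3 * c / 4 ≤ (u : StrongDual ℝ F) (x n) from hu_large,
      show (v : StrongDual ℝ F) (x n) ≤ c / 4 from hv_small]

end SmallForm

/-! ### Monotone functionals and energy forms -/

theorem exists_tendsto_bilinear {E : Type*} [AddCommMonoid E] [Module ℝ E] {ι : Type*}
    (𝒰 : Ultrafilter ι) (B : ι → E →ₗ[ℝ] E →ₗ[ℝ] ℝ) (hB : ∀ x y, ∃ C, ∀ i, |B i x y| ≤ C) :
    ∃ B₀ : E →ₗ[ℝ] E →ₗ[ℝ] ℝ, ∀ x y, Tendsto (fun i => B i x y) 𝒰 (𝓝 (B₀ x y)) := by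
  have hlim (x y : E) : ∃ a, Tendsto (fun i => B i x y) 𝒰 (𝓝 a) := by
    obtain ⟨C, hC⟩ := hB x y
    obtain ⟨a, -, ha⟩ := isCompact_Icc.ultrafilter_le_nhds (𝒰.map fun i => B i x y)
      (le_principal_iff.2 <| mem_map.2 <| univ_mem' fun i => abs_le.1 (hC i))
    exact ⟨a, ha⟩
  choose b hb using hlim
  refine ⟨LinearMap.mk₂ ℝ b (fun x x' y => ?_) (fun r x y => ?_) (fun x y y' => ?_)
    (fun r x y => ?_), hb⟩
  · exact tendsto_nhds_unique (hb (x + x') y) (by simpa using (hb x y).add (hb x' y))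
  · exact tendsto_nhds_unique (hb (r • x) y) (by simpa using (hb x y).const_mul r)
  · exact tendsto_nhds_unique (hb x (y + y')) (by simpa using (hb x y).add (hb x y'))
  · exact tendsto_nhds_unique (hb x (r • y)) (by simpa using (hb x y).const_mul r)

section EnergyForm

variable {P V : Type*} [NormedAddCommGroup V] [InnerProductSpace ℝ V]

/-- The energy form `(f, g) ↦ μ(⟨f, g⟩)` on `V`-valued fields associated with a functional `μ`
on functions; for monotone `μ` it is positive. -/
def energyForm (μ : (P → ℝ) →ₗ[ℝ] ℝ) : (P → V) →ₗ[ℝ] (P → V) →ₗ[ℝ] ℝ :=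
  LinearMap.mk₂ ℝ (fun f g => μ fun x => inner ℝ (f x) (g x))
    (fun f f' g => by rw [← map_add]; congr 1; ext x; exact inner_add_left ..)
    (fun r f g => by rw [← map_smul]; congr 1; ext x; exact real_inner_smul_left ..)
    (fun f g g' => by rw [← map_add]; congr 1; ext x; exact inner_add_right ..)
    (fun r f g => by rw [← map_smul]; congr 1; ext x; exact real_inner_smul_right ..)

theorem energyForm_apply (μ : (P → ℝ) →ₗ[ℝ] ℝ) (f g : P → V) :
    energyForm μ f g = μ fun x => inner ℝ (f x) (g x) := rfl

variable {μ : (P → ℝ) →ₗ[ℝ] ℝ} (hμ : Monotone μ)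

theorem map_const_eq_mul_map_one (μ : (P → ℝ) →ₗ[ℝ] ℝ) (c : ℝ) :
    μ (fun _ => c) = c * μ 1 := by
  rw [← smul_eq_mul, ← map_smul]
  congr 1
  ext x
  simp

include hμ

theorem map_le_mul_map_add {f g : P → ℝ} {C η : ℝ} (h : ∀ x, f x ≤ C * g x + η) :
    μ f ≤ C * μ g + η * μ 1 := by
  rw [← map_const_eq_mul_map_one, ← smul_eq_mul, ← map_smul, ← map_add]
  exact hμ h

theorem energyForm_self_nonneg (f : P → V) : 0 ≤ energyForm μ f f := by
  rw [energyForm_apply, ← map_zero μ]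
  exact hμ fun _ => real_inner_self_nonneg

theorem abs_energyForm_le {f g : P → V} {C C' : ℝ} (hC : 0 ≤ C) (hf : ∀ x, ‖f x‖ ≤ C)
    (hg : ∀ x, ‖g x‖ ≤ C') : |energyForm μ f g| ≤ C * C' * μ 1 := by
  have hfg (x : P) : |inner ℝ (f x) (g x)| ≤ C * C' :=
    (abs_real_inner_le_norm _ _).trans (mul_le_mul (hf x) (hg x) (norm_nonneg _) hC)
  rw [← map_const_eq_mul_map_one, abs_le, ← map_neg]
  exact ⟨hμ fun x => (abs_le.1 (hfg x)).1, hμ fun x => (abs_le.1 (hfg x)).2⟩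

theorem map_norm_le_energyForm (f : P → V) {t : ℝ} (ht : 0 < t) :
    (μ fun x => ‖f x‖) ≤ energyForm μ f f / (2 * t) + t / 2 * μ 1 := by
  have amgm (x : P) : ‖f x‖ ≤ (2 * t)⁻¹ * inner ℝ (f x) (f x) + t / 2 := by
    rw [real_inner_self_eq_norm_sq, ← div_eq_inv_mul, div_add' _ _ _ (by positivity),
      le_div_iff₀ (by positivity)]
    nlinarith [sq_nonneg (‖f x‖ - t)]
  rw [energyForm_apply, div_eq_inv_mul (μ _)]
  exact map_le_mul_map_add hμ amgm

end EnergyForm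

/-! ### Lipschitz-free spaces and Hajłasz gradients -/

/-- `h` is a Hajłasz gradient of `f`. Unlike an upper gradient, it is tested against pairs of
points only, hence against molecules of the Lipschitz-free space. -/
def IsHajlaszGradient {M : Type*} [PseudoMetricSpace M] (f h : M → ℝ) : Prop :=
  ∀ x y, |f x - f y| ≤ dist x y * (h x + h y)

namespace IsLipschitzFree

variable {M : Type*} [MetricSpace M] {o : M} {F : Type*} [NormedAddCommGroup F]
  [NormedSpace ℝ F] {δ : M → F} (hδ : IsLipschitzFree o δ)

include hδ

theorem lipschitzWith_apply (φ : StrongDual ℝ F) : LipschitzWith ‖φ‖₊ fun x => φ (δ x) :=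
  mul_one ‖φ‖₊ ▸ φ.lipschitz.comp hδ.isometry.lipschitz

theorem ext {φ ψ : StrongDual ℝ F} (h : ∀ x, φ (δ x) = ψ (δ x)) : φ = ψ :=
  ContinuousLinearMap.ext_on hδ.dense_span (by rintro _ ⟨x, rfl⟩; exact h x)

theorem norm_le {φ : StrongDual ℝ F} {L : NNReal} (hφ : LipschitzWith L fun x => φ (δ x)) :
    ‖φ‖ ≤ L := by
  obtain ⟨ψ, hψ, hψφ⟩ := hδ.lift L _ hφ (by rw [hδ.map_base, map_zero])
  rwa [← hδ.ext hψφ]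

theorem tendsto_apply {ι : Type*} {l : Filter ι} {φ : ι → StrongDual ℝ F} {φ₀ : StrongDual ℝ F}
    {C : NNReal} (hC : ∀ i, ‖φ i‖₊ ≤ C)
    (h : ∀ x, Tendsto (fun i => φ i (δ x)) l (𝓝 (φ₀ (δ x)))) (γ : F) :
    Tendsto (fun i => φ i γ) l (𝓝 (φ₀ γ)) := by
  have hequi : Equicontinuous fun i => (φ i : F → ℝ) :=
    (LipschitzWith.uniformEquicontinuous _ C fun i =>
      (φ i).lipschitz.weaken (hC i)).equicontinuous
  refine (hequi.isClosed_setOfPred_tendsto φ₀.continuous).closure_subset_iff.2 ?_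
    (hδ.dense_span γ)
  intro z hz
  induction hz using Submodule.span_induction with
  | mem z hz => obtain ⟨x, rfl⟩ := hz; exact h x
  | zero => simpa using tendsto_const_nhds
  | add y z _ _ hy hz => simpa using hy.add hz
  | smul r z _ hz => simpa using hz.const_mul r

end IsLipschitzFree

section Hajlasz

variable {M : Type*} [MetricSpace M] {F : Type*} [NormedAddCommGroup F] [NormedSpace ℝ F]

/-- The elements of `F` whose pairing with any functional is controlled by the Hajłasz gradients
of that functional, through a monotone functional of mass at most `2C`. For a Lipschitz-free
space this contains the finite sums of molecules with total weight at most `C`. -/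
def hajlaszBody (δ : M → F) (C : ℝ) : Set F :=
  {z | ∃ μ : (M → ℝ) →ₗ[ℝ] ℝ, Monotone μ ∧ μ 1 ≤ 2 * C ∧
    ∀ (Φ : StrongDual ℝ F) (h : M → ℝ), IsHajlaszGradient (fun x => Φ (δ x)) h → |Φ z| ≤ μ h}

theorem zero_mem_hajlaszBody (δ : M → F) {C : ℝ} (hC : 0 ≤ C) : 0 ∈ hajlaszBody δ C :=
  ⟨0, monotone_const, by simpa using hC, by simp⟩

theorem smul_sub_mem_hajlaszBody (δ : M → F) {C t : ℝ} (ht : 0 ≤ t) {x y : M}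
    (htC : t * dist x y ≤ C) : t • (δ x - δ y) ∈ hajlaszBody δ C := by
  let ev : M → (M → ℝ) →ₗ[ℝ] ℝ := fun x => LinearMap.proj x
  let μ := (t * dist x y) • (ev x + ev y)
  refine ⟨μ, fun f g hfg => ?_, ?_, fun Φ h hh => ?_⟩
  · have := add_le_add (hfg x) (hfg y)
    exact mul_le_mul_of_nonneg_left this (by positivity)
  · change t * dist x y * (1 + 1) ≤ 2 * C
    linarith
  · rw [map_smul, map_sub, smul_eq_mul, abs_mul, abs_of_nonneg ht]
    exact (mul_le_mul_of_nonneg_left (hh x y) ht).trans_eq (mul_assoc _ _ _).symm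

theorem convex_hajlaszBody (δ : M → F) (C : ℝ) : Convex ℝ (hajlaszBody δ C) := by
  rintro z ⟨μ, hμ, hμ_one, hz⟩ w ⟨ν, hν, hν_one, hw⟩ a b ha hb hab
  refine ⟨a • μ + b • ν, fun f g hfg => ?_, ?_, fun Φ h hh => ?_⟩
  · exact add_le_add (mul_le_mul_of_nonneg_left (hμ hfg) ha)
      (mul_le_mul_of_nonneg_left (hν hfg) hb)
  · calc a * μ 1 + b * ν 1 ≤ a * (2 * C) + b * (2 * C) := by gcongr
      _ = 2 * C := by rw [← add_mul, hab, one_mul]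
  · calc |Φ (a • z + b • w)| ≤ |a * Φ z| + |b * Φ w| := by
          rw [map_add, map_smul, map_smul]; exact abs_add_le _ _
      _ = a * |Φ z| + b * |Φ w| := by rw [abs_mul, abs_mul, abs_of_nonneg ha, abs_of_nonneg hb]
      _ ≤ a * μ h + b * ν h := by gcongr; exacts [hz Φ h hh, hw Φ h hh]

variable {o : M} {δ : M → F} (hδ : IsLipschitzFree o δ)

include hδ

namespace IsLipschitzFree

theorem closedBall_subset_closure_hajlaszBody {C : ℝ} (hC : 0 < C) :
    closedBall (0 : F) C ⊆ closure (hajlaszBody δ C) := by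
  intro γ hγ
  by_contra hγ_not
  obtain ⟨φ, u, hφu, huφ⟩ := geometric_hahn_banach_closed_point
    (convex_hajlaszBody δ C).closure isClosed_closure hγ_not
  have hu : 0 < u := by
    simpa using hφu 0 (subset_closure (zero_mem_hajlaszBody δ hC.le))
  have hlip : LipschitzWith (u / C).toNNReal fun x => φ (δ x) := by
    refine LipschitzWith.of_le_add_mul _ fun x y => ?_
    rw [Real.coe_toNNReal _ (by positivity)]
    rcases eq_or_ne x y with rfl | hxy
    · simp
    have hd := dist_pos.2 hxy
    have := hφu _ (subset_closure (smul_sub_mem_hajlaszBody δ (t := C / dist x y) (by positivity)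
      (div_mul_cancel₀ C hd.ne').le))
    rw [map_smul, map_sub, smul_eq_mul, div_mul_eq_mul_div, div_lt_iff₀ hd] at this
    rw [div_mul_eq_mul_div, ← sub_le_iff_le_add', le_div_iff₀ hC]
    linarith
  have hnorm := hδ.norm_le hlip
  rw [Real.coe_toNNReal _ (by positivity)] at hnorm
  have : φ γ ≤ u / C * C := (le_abs_self _).trans <|
    (φ.le_of_opNorm_le hnorm γ).trans (by gcongr; simpa using hγ)
  rw [div_mul_cancel₀ _ hC.ne'] at this
  linarith

theorem exists_hajlasz_bound {C κ : ℝ} (hC : 0 < C) (hκ : 0 < κ) {γ : F} (hγ : ‖γ‖ ≤ C) :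
    ∃ μ : (M → ℝ) →ₗ[ℝ] ℝ, Monotone μ ∧ μ 1 ≤ 2 * C ∧ ∀ (Φ : StrongDual ℝ F) (h : M → ℝ),
      IsHajlaszGradient (fun x => Φ (δ x)) h → |Φ γ| ≤ μ h + κ * ‖Φ‖ := by
  obtain ⟨z, ⟨μ, hμ, hμ_one, hz⟩, hγz⟩ := Metric.mem_closure_iff.1
    (hδ.closedBall_subset_closure_hajlaszBody hC (mem_closedBall_zero_iff.2 hγ)) κ hκ
  refine ⟨μ, hμ, hμ_one, fun Φ h hh => ?_⟩
  calc |Φ γ| = |Φ z + Φ (γ - z)| := by rw [map_sub, add_sub_cancel]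
    _ ≤ |Φ z| + ‖Φ‖ * ‖γ - z‖ := (abs_add_le _ _).trans (by gcongr; exact Φ.le_opNorm _)
    _ ≤ μ h + κ * ‖Φ‖ := by
        rw [mul_comm κ, ← dist_eq_norm]
        gcongr
        exact hz Φ h hh

end IsLipschitzFree

end Hajlasz

/-! ### Gradient structures -/

/-- An abstract first-order calculus on a metric space `M`, with gradients in `V`. The smooth
functions have bounded gradients and approximate Lipschitz functions without increasing the
Lipschitz constant; the bumps are smooth functions of totally bounded support, which approximate
norms of gradients from below. It is what the proof of property (V*) needs to know about `M`. -/
structure GradientStructure (M : Type*) [MetricSpace M] (V : Type*) [NormedAddCommGroup V]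
    [InnerProductSpace ℝ V] where
  /-- the smooth functions -/
  smooth : Submodule ℝ (M → ℝ)
  /-- the bump functions -/
  bump : Submodule ℝ (M → ℝ)
  /-- the gradient, with unspecified values outside `smooth` -/
  grad : (M → ℝ) → M → V
  const_mem : ∀ a : ℝ, (fun _ => a) ∈ smooth
  grad_const : ∀ a : ℝ, grad (fun _ => a) = 0
  grad_add : ∀ {f g}, f ∈ smooth → g ∈ smooth → grad (f + g) = grad f + grad g
  grad_smul : ∀ (a : ℝ) {f}, f ∈ smooth → grad (a • f) = a • grad f
  exists_norm_grad_le : ∀ {f}, f ∈ smooth → ∃ C : NNReal, ∀ x, ‖grad f x‖ ≤ C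
  lipschitzWith : ∀ {f} {C : NNReal}, f ∈ smooth → (∀ x, ‖grad f x‖ ≤ C) → LipschitzWith C f
  bump_le_smooth : bump ≤ smooth
  mul_mem : ∀ {h u}, h ∈ bump → u ∈ smooth → h * u ∈ smooth
  grad_mul : ∀ {h u}, h ∈ bump → u ∈ smooth →
    ∀ x, grad (h * u) x = h x • grad u x + u x • grad h x
  totallyBounded : ∀ {h}, h ∈ bump → TotallyBounded {x | h x ≠ 0 ∨ grad h x ≠ 0}
  exists_approx : ∀ {f}, LipschitzWith 1 f → ∀ (A : Finset M) {ε : ℝ}, 0 < ε →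
    ∃ g ∈ smooth, (∀ x, ‖grad g x‖ ≤ 1) ∧ ∀ x ∈ A, |g x - f x| ≤ ε
  exists_bump_norm_grad : ∀ {f}, f ∈ smooth → ∀ {η : ℝ}, 0 < η →
    ∃ h ∈ bump, ∀ x, 0 ≤ h x ∧ h x ≤ ‖grad f x‖ ∧ ‖grad f x‖ ≤ h x + η

namespace GradientStructure

variable {M : Type*} [MetricSpace M] {V : Type*} [NormedAddCommGroup V] [InnerProductSpace ℝ V]
  (𝓖 : GradientStructure M V)

/-- `g` is a uniform limit from below of nonnegative bump functions. -/
def IsBumpApproximable (g : M → ℝ) : Prop :=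
  ∀ η > 0, ∃ h ∈ 𝓖.bump, ∀ x, 0 ≤ h x ∧ h x ≤ g x ∧ g x ≤ h x + η

variable {𝓖}

theorem isBumpApproximable_zero : 𝓖.IsBumpApproximable 0 := fun η hη =>
  ⟨0, 𝓖.bump.zero_mem, fun x => ⟨le_rfl, le_rfl, by simpa using hη.le⟩⟩

theorem isBumpApproximable_norm_grad {f : M → ℝ} (hf : f ∈ 𝓖.smooth) :
    𝓖.IsBumpApproximable fun x => ‖𝓖.grad f x‖ :=
  fun _ hη => 𝓖.exists_bump_norm_grad hf hη

theorem IsBumpApproximable.add {g g' : M → ℝ} (hg : 𝓖.IsBumpApproximable g)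
    (hg' : 𝓖.IsBumpApproximable g') : 𝓖.IsBumpApproximable (g + g') := by
  intro η hη
  obtain ⟨h, hh, hhg⟩ := hg (η / 2) (half_pos hη)
  obtain ⟨h', hh', hhg'⟩ := hg' (η / 2) (half_pos hη)
  refine ⟨h + h', 𝓖.bump.add_mem hh hh', fun x => ?_⟩
  obtain ⟨h0, h1, h2⟩ := hhg x
  obtain ⟨h0', h1', h2'⟩ := hhg' x
  exact ⟨add_nonneg h0 h0', add_le_add h1 h1', by simp only [Pi.add_apply]; linarith⟩

section Localization

variable {h u : M → ℝ}

theorem exists_finset_abs_le {T : Set M} (hT : TotallyBounded T) {ε : ℝ} (hε : 0 < ε) :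
    ∃ A : Finset M, ∀ u : M → ℝ, LipschitzWith 1 u → (∀ a ∈ A, |u a| ≤ ε) →
      ∀ x ∈ T, |u x| ≤ 2 * ε := by
  obtain ⟨A, hA, hTA⟩ := Metric.totallyBounded_iff.1 hT ε hε
  refine ⟨hA.toFinset, fun u hu hu_small x hx => ?_⟩
  obtain ⟨a, ha, hxa⟩ := mem_iUnion₂.1 (hTA hx)
  have hdist : |u x - u a| ≤ dist x a := by
    simpa [Real.dist_eq] using hu.dist_le_mul x a
  calc |u x| = |u a + (u x - u a)| := by rw [add_sub_cancel]
    _ ≤ |u a| + |u x - u a| := abs_add_le _ _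
    _ ≤ ε + ε := add_le_add (hu_small a (hA.mem_toFinset.2 ha)) (hdist.trans (mem_ball.1 hxa).le)
    _ = 2 * ε := (two_mul ε).symm

theorem isHajlaszGradient_mul {T : Set M} {L : NNReal} {ε : ℝ} (hh : LipschitzWith L h)
    (hh_nonneg : ∀ x, 0 ≤ h x) (hhT : ∀ x ∉ T, h x = 0) (hu : LipschitzWith 1 u)
    (hε : 0 ≤ ε) (huT : ∀ x ∈ T, |u x| ≤ ε) :
    IsHajlaszGradient (h * u) fun x => h x + ε * L := by
  have key {x : M} (hx : x ∈ T) (y : M) :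
      |h x * u x - h y * u y| ≤ dist x y * (h x + ε * L + (h y + ε * L)) := by
    have hdist : |u x - u y| ≤ dist x y := by
      simpa [Real.dist_eq] using hu.dist_le_mul x y
    calc |h x * u x - h y * u y| = |h y * (u x - u y) + u x * (h x - h y)| := by congr 1; ring
      _ ≤ |h y| * |u x - u y| + |u x| * |h x - h y| := by
          rw [← abs_mul, ← abs_mul]; exact abs_add_le _ _
      _ ≤ h y * dist x y + ε * (L * dist x y) := by
          rw [abs_of_nonneg (hh_nonneg y)]
          gcongr
          exacts [hh_nonneg y, huT x hx, hh.dist_le_mul x y]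
      _ ≤ dist x y * (h x + ε * L + (h y + ε * L)) := by
          have : 0 ≤ dist x y * (h x + ε * L) := by have := hh_nonneg x; positivity
          linarith
  intro x y
  by_cases hx : x ∈ T
  · exact key hx y
  by_cases hy : y ∈ T
  · rw [abs_sub_comm, dist_comm, add_comm]
    exact key hy x
  · simp only [Pi.mul_apply, hhT x hx, hhT y hy, zero_mul, sub_zero, abs_zero, zero_add]
    positivity

theorem exists_isHajlaszGradient_mul (hh : h ∈ 𝓖.bump) (hh_nonneg : ∀ x, 0 ≤ h x) {η : ℝ}
    (hη : 0 < η) : ∃ (A : Finset M) (ε : ℝ), 0 < ε ∧ ∀ u ∈ 𝓖.smooth, (∀ x, ‖𝓖.grad u x‖ ≤ 1) →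
      (∀ a ∈ A, |u a| ≤ ε) →
      (∀ x, ‖u x • 𝓖.grad h x‖ ≤ η) ∧ IsHajlaszGradient (h * u) fun x => h x + η := by
  obtain ⟨L, hL⟩ := 𝓖.exists_norm_grad_le (𝓖.bump_le_smooth hh)
  obtain ⟨ε, hε, hεL⟩ : ∃ ε > 0, 2 * ε * (L : ℝ) ≤ η := by
    refine ⟨η / (2 * (L + 1)), by positivity, ?_⟩
    rw [mul_div_assoc', div_mul_eq_mul_div, div_le_iff₀ (by positivity)]
    nlinarith [L.coe_nonneg]
  obtain ⟨A, hA⟩ := exists_finset_abs_le (𝓖.totallyBounded hh) hε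
  refine ⟨A, ε, hε, fun u hu hu_grad huA => ?_⟩
  have hu_lip : LipschitzWith 1 u := 𝓖.lipschitzWith hu hu_grad
  have huT := hA u hu_lip huA
  refine ⟨fun x => ?_, fun x y => ?_⟩
  · by_cases hx : 𝓖.grad h x = 0
    · simpa [hx] using hη.le
    · rw [norm_smul]
      exact (mul_le_mul (huT x (.inr hx)) (hL x) (norm_nonneg _) (by positivity)).trans hεL
  · have := isHajlaszGradient_mul (𝓖.lipschitzWith (𝓖.bump_le_smooth hh) hL) hh_nonneg
      (fun x hx => by_contra fun hhx => hx (.inl hhx)) hu_lip (by positivity) huT x y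
    refine this.trans ?_
    beta_reduce
    gcongr

end Localization

section Functionals

variable {F : Type*} [NormedAddCommGroup F] [NormedSpace ℝ F]

/-- The pullback of functionals on `F` to functions on `M` along `δ`. -/
def dualPullback (δ : M → F) : StrongDual ℝ F →ₗ[ℝ] M → ℝ where
  toFun φ x := φ (δ x)
  map_add' _ _ := rfl
  map_smul' _ _ := rfl

variable (𝓖) in
/-- The functionals on `F` that are smooth as functions on `M`. -/
def dualSmooth (δ : M → F) : Submodule ℝ (StrongDual ℝ F) :=
  𝓖.smooth.comap (dualPullback δ)

variable (𝓖) in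
/-- The gradient of a smooth functional. -/
def dualGrad (δ : M → F) : 𝓖.dualSmooth δ →ₗ[ℝ] M → V where
  toFun φ := 𝓖.grad fun x => (φ : StrongDual ℝ F) (δ x)
  map_add' φ ψ := 𝓖.grad_add φ.2 ψ.2
  map_smul' a φ := 𝓖.grad_smul a φ.2

variable {o : M} {δ : M → F}

theorem exists_dualSmooth_eq (hδ : IsLipschitzFree o δ) {f : M → ℝ} (hf : f ∈ 𝓖.smooth)
    (hfo : f o = 0) : ∃ φ : 𝓖.dualSmooth δ,
      (∀ x, (φ : StrongDual ℝ F) (δ x) = f x) ∧ 𝓖.dualGrad δ φ = 𝓖.grad f := by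
  obtain ⟨C, hC⟩ := 𝓖.exists_norm_grad_le hf
  obtain ⟨φ, -, hφ⟩ := hδ.lift C f (𝓖.lipschitzWith hf hC) hfo
  have hφf : dualPullback δ φ = f := funext hφ
  exact ⟨⟨φ, show dualPullback δ φ ∈ 𝓖.smooth from hφf ▸ hf⟩, hφ, congrArg 𝓖.grad hφf⟩

theorem norm_le_of_norm_dualGrad_le (hδ : IsLipschitzFree o δ) {φ : 𝓖.dualSmooth δ} {C : ℝ}
    (hC : 0 ≤ C) (hφ : ∀ x, ‖𝓖.dualGrad δ φ x‖ ≤ C) : ‖φ‖ ≤ C :=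
  hδ.norm_le (L := ⟨C, hC⟩) (𝓖.lipschitzWith φ.2 hφ)

theorem isWUC_of_sum_norm_dualGrad_le (hδ : IsLipschitzFree o δ) {ψ : ℕ → 𝓖.dualSmooth δ} {C : ℝ}
    (hψ : ∀ n x, ∑ k ∈ Finset.range n, ‖𝓖.dualGrad δ (ψ k) x‖ ≤ C) :
    IsWUC fun n => (ψ n : StrongDual ℝ F) := by
  refine .of_norm_sum_smul_le (C := C) fun n ε hε => ?_
  have hC : 0 ≤ C := by simpa using hψ 0 o
  have hgrad (x : M) : ‖𝓖.dualGrad δ (∑ k ∈ Finset.range n, ε k • ψ k) x‖ ≤ C := by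
    rw [map_sum, Finset.sum_apply]
    refine (norm_sum_le_of_le _ fun k _ => ?_).trans (hψ n x)
    rw [map_smul, Pi.smul_apply, norm_smul]
    exact mul_le_of_le_one_left (norm_nonneg _) (hε k)
  simpa using norm_le_of_norm_dualGrad_le hδ hC hgrad

theorem convex_setOf_norm_dualGrad_le (δ : M → F) (C : ℝ) :
    Convex ℝ {φ : 𝓖.dualSmooth δ | ∀ x, ‖𝓖.dualGrad δ φ x‖ ≤ C} := by
  intro φ hφ ψ hψ a b ha hb hab x
  simpa [hab] using (convex_closedBall (0 : V) C) (mem_closedBall_zero_iff.2 (hφ x))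
    (mem_closedBall_zero_iff.2 (hψ x)) ha hb hab

theorem neg_mem_setOf_norm_dualGrad_le {φ : 𝓖.dualSmooth δ} {C : ℝ}
    (hφ : φ ∈ {φ : 𝓖.dualSmooth δ | ∀ x, ‖𝓖.dualGrad δ φ x‖ ≤ C}) :
    -φ ∈ {φ : 𝓖.dualSmooth δ | ∀ x, ‖𝓖.dualGrad δ φ x‖ ≤ C} := fun x => by
  have := map_neg (𝓖.dualGrad δ) φ
  exact (congrArg norm (congrFun this x)).trans_le ((norm_neg _).trans_le (hφ x))

theorem exists_dualSmooth_abs_sub_le (hδ : IsLipschitzFree o δ) (φ : StrongDual ℝ F)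
    (hφ : ‖φ‖ ≤ 1) (A : Finset F) {η : ℝ} (hη : 0 < η) :
    ∃ ψ : 𝓖.dualSmooth δ, (∀ x, ‖𝓖.dualGrad δ ψ x‖ ≤ 1) ∧
      ∀ z ∈ A, |(ψ : StrongDual ℝ F) z - φ z| ≤ η := by
  classical
  have hlip : LipschitzWith 1 fun x => φ (δ x) := (hδ.lipschitzWith_apply φ).weaken hφ
  have happrox (q : Finset M × ℕ) : ∃ ψ : 𝓖.dualSmooth δ, (∀ x, ‖𝓖.dualGrad δ ψ x‖ ≤ 1) ∧
      ∀ x ∈ q.1, |(ψ : StrongDual ℝ F) (δ x) - φ (δ x)| ≤ 2 * (1 / ((q.2 : ℝ) + 1)) := by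
    obtain ⟨g, hg, hg_grad, hgφ⟩ := 𝓖.exists_approx hlip (insert o q.1)
      (Nat.one_div_pos_of_nat (n := q.2))
    have hconst := 𝓖.const_mem (-g o)
    obtain ⟨ψ, hψ, hψ_grad⟩ := exists_dualSmooth_eq (𝓖 := 𝓖) hδ (𝓖.smooth.add_mem hg hconst)
      (add_neg_cancel (g o))
    refine ⟨ψ, fun x => ?_, fun x hx => ?_⟩
    · simpa [hψ_grad, 𝓖.grad_add hg hconst, 𝓖.grad_const] using hg_grad x
    · have hx := hgφ x (Finset.mem_insert_of_mem hx)
      have ho := hgφ o (Finset.mem_insert_self _ _)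
      rw [hδ.map_base, map_zero, sub_zero] at ho
      rw [hψ, Pi.add_apply]
      calc |g x + -g o - φ (δ x)| = |(g x - φ (δ x)) - g o| := by congr 1; ring
        _ ≤ |g x - φ (δ x)| + |g o| := abs_sub _ _
        _ ≤ 2 * (1 / ((q.2 : ℝ) + 1)) := by linarith
  choose ψ hψ_grad hψφ using happrox
  have hlim (x : M) : Tendsto (fun q => (ψ q : StrongDual ℝ F) (δ x)) (atTop ×ˢ atTop)
      (𝓝 (φ (δ x))) := by
    refine tendsto_iff_dist_tendsto_zero.2 (squeeze_zero' (.of_forall fun _ => dist_nonneg)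
      (((eventually_ge_atTop {x}).prod_inl _).mono fun q hq =>
        hψφ q x (hq (Finset.mem_singleton_self x))) ?_)
    simpa [Function.comp_def] using
      (tendsto_one_div_add_atTop_nhds_zero_nat.const_mul (2 : ℝ)).comp tendsto_snd
  have hclose (z : F) := Metric.tendsto_nhds.1 (hδ.tendsto_apply (C := 1)
    (fun q => norm_le_of_norm_dualGrad_le hδ zero_le_one (hψ_grad q)) hlim z) η hη
  obtain ⟨q, hq⟩ := ((eventually_all_finset A).2 fun z _ => hclose z).exists
  exact ⟨ψ q, hψ_grad q, fun z hz => (hq z hz).le⟩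

theorem exists_dualSmooth_mul (hδ : IsLipschitzFree o δ) (hh : h ∈ 𝓖.bump) (φ : 𝓖.dualSmooth δ) :
    ∃ Φ : 𝓖.dualSmooth δ, (∀ x, (Φ : StrongDual ℝ F) (δ x) = h x * (φ : StrongDual ℝ F) (δ x)) ∧
      ∀ x, 𝓖.dualGrad δ Φ x =
        h x • 𝓖.dualGrad δ φ x + (φ : StrongDual ℝ F) (δ x) • 𝓖.grad h x := by
  have hφ : (fun x => (φ : StrongDual ℝ F) (δ x)) ∈ 𝓖.smooth := φ.2
  obtain ⟨Φ, hΦ, hΦ_grad⟩ := exists_dualSmooth_eq hδ (𝓖.mul_mem hh hφ)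
    (show h o * (φ : StrongDual ℝ F) (δ o) = 0 by rw [hδ.map_base, map_zero, mul_zero])
  exact ⟨Φ, hΦ, fun x => by rw [hΦ_grad, 𝓖.grad_mul hh hφ]; rfl⟩

/-- The functional `Φ` carries the part of `φ` that meets the bumps below `g`; it is harmless since
`g` is nearly a Hajłasz gradient of it. -/
theorem IsBumpApproximable.exists_localization (hδ : IsLipschitzFree o δ) {g : M → ℝ}
    (hg : 𝓖.IsBumpApproximable g) {C : ℝ} (hC : 0 ≤ C) (hgC : ∀ x, g x ≤ C) {η : ℝ} (hη : 0 < η) :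
    ∃ (A : Finset M) (ε : ℝ), 0 < ε ∧ ∀ φ : 𝓖.dualSmooth δ, (∀ x, ‖𝓖.dualGrad δ φ x‖ ≤ 1) →
      (∀ a ∈ A, |(φ : StrongDual ℝ F) (δ a)| ≤ ε) →
      ∃ Φ : 𝓖.dualSmooth δ, (∀ x, ‖𝓖.dualGrad δ (C • φ - Φ) x‖ + g x ≤ C + η) ∧
        (∀ x, ‖𝓖.dualGrad δ (C • φ - Φ) x‖ ≤ C * ‖𝓖.dualGrad δ φ x‖ + η) ∧ ‖Φ‖ ≤ C + η ∧
        IsHajlaszGradient (fun x => (Φ : StrongDual ℝ F) (δ x)) fun x => g x + η := by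
  obtain ⟨h, hh, hhg⟩ := hg (η / 2) (half_pos hη)
  obtain ⟨A, ε, hε, hA⟩ := exists_isHajlaszGradient_mul hh (fun x => (hhg x).1) (half_pos hη)
  refine ⟨A, ε, hε, fun φ hφ hφA => ?_⟩
  let u : M → ℝ := fun x => (φ : StrongDual ℝ F) (δ x)
  obtain ⟨hu_grad, hu_hajlasz⟩ := hA u φ.2 hφ hφA
  obtain ⟨Φ, hΦ, hD⟩ := exists_dualSmooth_mul hδ hh φ
  have hΦ_le (x : M) : ‖𝓖.dualGrad δ Φ x‖ ≤ h x * ‖𝓖.dualGrad δ φ x‖ + η / 2 := by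
    refine (hD x ▸ norm_add_le _ _).trans (add_le_add ?_ (hu_grad x))
    rw [norm_smul, Real.norm_of_nonneg (hhg x).1]
  have hψ_le (x : M) :
      ‖𝓖.dualGrad δ (C • φ - Φ) x‖ ≤ (C - h x) * ‖𝓖.dualGrad δ φ x‖ + η / 2 := by
    have hCh : 0 ≤ C - h x := sub_nonneg.2 ((hhg x).2.1.trans (hgC x))
    have hDψ : 𝓖.dualGrad δ (C • φ - Φ) x =
        (C - h x) • 𝓖.dualGrad δ φ x - u x • 𝓖.grad h x := by
      have := map_sub (𝓖.dualGrad δ) (C • φ) Φ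
      rw [map_smul] at this
      refine (congrFun this x).trans ?_
      rw [Pi.sub_apply, hD, Pi.smul_apply]
      module
    refine (hDψ ▸ norm_sub_le _ _).trans (add_le_add ?_ (hu_grad x))
    rw [norm_smul, Real.norm_of_nonneg hCh]
  refine ⟨Φ, fun x => ?_, fun x => ?_, norm_le_of_norm_dualGrad_le hδ (by positivity) fun x => ?_,
    fun x y => ?_⟩
  · obtain ⟨-, h_le, h_ge⟩ := hhg x
    nlinarith [hψ_le x, hφ x, hgC x]
  · nlinarith [hψ_le x, (hhg x).1, norm_nonneg (𝓖.dualGrad δ φ x)]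
  · obtain ⟨h_nonneg, h_le, -⟩ := hhg x
    nlinarith [hΦ_le x, hφ x, hgC x]
  · beta_reduce
    rw [hΦ, hΦ]
    refine (hu_hajlasz x y).trans (mul_le_mul_of_nonneg_left ?_ dist_nonneg)
    linarith [(hhg x).2.1, (hhg y).2.1]

end Functionals

end GradientStructure

/-! ### Construction of a weakly unconditionally Cauchy series -/

theorem exists_seq_sum_range {α β : Type*} [AddCommMonoid β] {Good : ℕ → β → Prop} {P : α → Prop}
    {w : α → β} (h_zero : Good 0 0)
    (h_succ : ∀ n b, Good n b → ∃ a, P a ∧ Good (n + 1) (b + w a)) :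
    ∃ a : ℕ → α, ∀ n, P (a n) ∧ Good n (∑ k ∈ Finset.range n, w (a k)) := by
  have : Nonempty α := ⟨(h_succ 0 0 h_zero).choose⟩
  choose! next hP hGood using h_succ
  let b : ℕ → β := Nat.rec 0 fun n b => b + w (next n b)
  have hb (n : ℕ) : Good n (b n) := by
    induction n with
    | zero => exact h_zero
    | succ n hn => exact hGood n _ hn
  have hb_sum (n : ℕ) : ∑ k ∈ Finset.range n, w (next k (b k)) = b n :=
    Finset.sum_range_induction _ _ rfl _ fun _ _ => rfl
  exact ⟨fun n => next n (b n), fun n => ⟨hP n _ (hb n), (hb_sum n).symm ▸ hb n⟩⟩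

namespace GradientStructure

variable {M : Type*} [MetricSpace M] {V : Type*} [NormedAddCommGroup V] [InnerProductSpace ℝ V]
  {𝓖 : GradientStructure M V}

section Blocks

variable {F : Type*} [NormedAddCommGroup F] [NormedSpace ℝ F] {o : M} {δ : M → F}
  (hδ : IsLipschitzFree o δ)
  {Λ : StrongDual ℝ (StrongDual ℝ F)} {c : ℝ} (hc : 0 < c)
  (hΛ : ∀ z : F, c < ‖Λ - NormedSpace.inclusionInDoubleDual ℝ F z‖)
  {ι : Type*} {𝒰 : Ultrafilter ι} {γ : ι → F}
  (hγ : ∀ φ : StrongDual ℝ F, Tendsto (fun i => φ (γ i)) 𝒰 (𝓝 (Λ φ)))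
  {μ : ι → (M → ℝ) →ₗ[ℝ] ℝ} (hμ : ∀ i, Monotone (μ i)) {C₁ : ℝ} (hμ_one : ∀ i, μ i 1 ≤ C₁)

include hμ hμ_one in
theorem exists_limit_energyForm (𝓖 : GradientStructure M V) (δ : M → F) (𝒰 : Ultrafilter ι) :
    ∃ B : 𝓖.dualSmooth δ →ₗ[ℝ] 𝓖.dualSmooth δ →ₗ[ℝ] ℝ, ∀ φ ψ,
      Tendsto (fun i => energyForm (μ i) (𝓖.dualGrad δ φ) (𝓖.dualGrad δ ψ)) 𝒰 (𝓝 (B φ ψ)) := by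
  refine exists_tendsto_bilinear 𝒰
    (fun i => (energyForm (μ i)).compl₁₂ (𝓖.dualGrad δ) (𝓖.dualGrad δ)) fun φ ψ => ?_
  obtain ⟨C, hC⟩ := 𝓖.exists_norm_grad_le φ.2
  obtain ⟨C', hC'⟩ := 𝓖.exists_norm_grad_le ψ.2
  refine ⟨C * C' * C₁, fun i => (abs_energyForm_le (hμ i) C.coe_nonneg hC hC').trans ?_⟩
  gcongr
  exact hμ_one i

include hδ hc hΛ hγ in
theorem exists_dualSmooth_form_le (B : 𝓖.dualSmooth δ →ₗ[ℝ] 𝓖.dualSmooth δ →ₗ[ℝ] ℝ)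
    (hB : ∀ φ, 0 ≤ B φ φ) {C : ℝ} (hBC : ∀ φ, (∀ x, ‖𝓖.dualGrad δ φ x‖ ≤ 1) → B φ φ ≤ C)
    {T : Set ι} (hT : T ∈ 𝒰) (A : Finset M) {ε ε' : ℝ} (hε : 0 < ε) (hε' : 0 < ε') :
    ∃ φ : 𝓖.dualSmooth δ, (∀ x, ‖𝓖.dualGrad δ φ x‖ ≤ 1) ∧
      (∀ x ∈ A, |(φ : StrongDual ℝ F) (δ x)| ≤ ε) ∧ B φ φ ≤ ε' ∧
      ∃ i ∈ T, c / 4 ≤ (φ : StrongDual ℝ F) (γ i) := by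
  let ev (x : M) : 𝓖.dualSmooth δ →ₗ[ℝ] ℝ :=
    LinearMap.proj x ∘ₗ dualPullback δ ∘ₗ (𝓖.dualSmooth δ).subtype
  let Q := ∑ x ∈ A, (LinearMap.mul ℝ ℝ).compl₁₂ (ev x) (ev x)
  have hQ (φ : 𝓖.dualSmooth δ) : Q φ φ = ∑ x ∈ A, (φ : StrongDual ℝ F) (δ x) ^ 2 := by
    simp [Q, ev, dualPullback, LinearMap.sum_apply, sq]
  have hQ_nonneg (φ : 𝓖.dualSmooth δ) : 0 ≤ Q φ φ :=
    hQ φ ▸ Finset.sum_nonneg fun _ _ => sq_nonneg _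
  have hBQ_le (φ : 𝓖.dualSmooth δ) (hφ : ∀ x, ‖𝓖.dualGrad δ φ x‖ ≤ 1) :
      (B + Q) φ φ ≤ C + ∑ x ∈ A, ‖δ x‖ ^ 2 := by
    have hφ_norm : ‖(φ : StrongDual ℝ F)‖ ≤ 1 := norm_le_of_norm_dualGrad_le hδ zero_le_one hφ
    rw [LinearMap.add_apply, LinearMap.add_apply, hQ]
    refine add_le_add (hBC φ hφ) (Finset.sum_le_sum fun x _ => sq_le_sq.2 ?_)
    simpa using (φ : StrongDual ℝ F).le_of_opNorm_le hφ_norm (δ x)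
  obtain ⟨φ, hφ, hφ_small, i, hi⟩ := exists_apply_self_le_of_bidual hc hΛ hγ
    (convex_setOf_norm_dualGrad_le δ 1) (fun φ hφ => neg_mem_setOf_norm_dualGrad_le hφ)
    (fun φ hφ A η hη => exists_dualSmooth_abs_sub_le hδ φ hφ A hη) (B + Q)
    (fun φ => add_nonneg (hB φ) (hQ_nonneg φ)) hBQ_le hT
    (ε := min (ε ^ 2) ε') (by positivity)
  rw [LinearMap.add_apply, LinearMap.add_apply] at hφ_small
  obtain ⟨hφ_eval, hφ_form⟩ := le_min_iff.1 hφ_small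
  refine ⟨φ, hφ, fun x hx => abs_le_of_sq_le_sq ?_ hε.le, ?_, i, hi⟩
  · have hxQ := Finset.single_le_sum (f := fun x => (φ : StrongDual ℝ F) (δ x) ^ 2)
      (fun _ _ => sq_nonneg _) hx
    rw [← hQ] at hxQ
    linarith [hB φ]
  · linarith [hQ_nonneg φ]

include hδ hc hΛ hγ hμ hμ_one in
theorem exists_dualSmooth_energy_le (hC₁ : 0 < C₁) {T : Set ι} (hT : T ∈ 𝒰) (A : Finset M)
    {ε t : ℝ} (hε : 0 < ε) (ht : 0 < t) :
    ∃ φ : 𝓖.dualSmooth δ, (∀ x, ‖𝓖.dualGrad δ φ x‖ ≤ 1) ∧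
      (∀ x ∈ A, |(φ : StrongDual ℝ F) (δ x)| ≤ ε) ∧
      (∀ᶠ i in 𝒰, (μ i fun x => ‖𝓖.dualGrad δ φ x‖) ≤ t) ∧
      ∃ i ∈ T, c / 4 ≤ (φ : StrongDual ℝ F) (γ i) := by
  obtain ⟨B, hB⟩ := exists_limit_energyForm hμ hμ_one 𝓖 δ 𝒰
  have hB_nonneg (φ : 𝓖.dualSmooth δ) : 0 ≤ B φ φ :=
    ge_of_tendsto' (hB φ φ) fun i => energyForm_self_nonneg (hμ i) _
  have hB_le (φ : 𝓖.dualSmooth δ) (hφ : ∀ x, ‖𝓖.dualGrad δ φ x‖ ≤ 1) : B φ φ ≤ C₁ := by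
    refine le_of_tendsto' (hB φ φ) fun i => ?_
    have := (le_abs_self _).trans (abs_energyForm_le (hμ i) zero_le_one hφ hφ)
    linarith [hμ_one i]
  obtain ⟨φ, hφ, hφA, hφB, hi⟩ := exists_dualSmooth_form_le hδ hc hΛ hγ B hB_nonneg hB_le hT A
    hε (ε' := t ^ 2 / C₁ / 2) (by positivity)
  refine ⟨φ, hφ, hφA, ?_, hi⟩
  have hBφ : B φ φ < t ^ 2 / C₁ := hφB.trans_lt (half_lt_self (by positivity))
  filter_upwards [(hB φ φ).eventually (gt_mem_nhds hBφ)] with i hi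
  calc (μ i fun x => ‖𝓖.dualGrad δ φ x‖)
      ≤ energyForm (μ i) (𝓖.dualGrad δ φ) (𝓖.dualGrad δ φ) / (2 * (t / C₁)) +
          t / C₁ / 2 * μ i 1 := map_norm_le_energyForm (hμ i) _ (by positivity)
    _ ≤ t ^ 2 / C₁ / (2 * (t / C₁)) + t / C₁ / 2 * C₁ := by gcongr; exact hμ_one i
    _ = t := by field_simp; norm_num

include hδ hc hΛ hγ hμ hμ_one in
theorem exists_dualSmooth_norm_add_le (hC₁ : 1 ≤ C₁)
    (hμ_hajlasz : ∀ i (Φ : StrongDual ℝ F) (h : M → ℝ),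
      IsHajlaszGradient (fun x => Φ (δ x)) h → |Φ (γ i)| ≤ μ i h + c / 48 * ‖Φ‖)
    {g : M → ℝ} (hg : 𝓖.IsBumpApproximable g) {C : ℝ} (hC : 1 ≤ C) (hC_two : C ≤ 2)
    (hgC : ∀ x, g x ≤ C) (hμg : ∀ᶠ i in 𝒰, μ i g ≤ c / 24) {r : ℝ} (hr : 0 < r) :
    ∃ ψ : 𝓖.dualSmooth δ, (∀ x, ‖𝓖.dualGrad δ ψ x‖ + g x ≤ C + r) ∧
      (∀ᶠ i in 𝒰, (μ i fun x => ‖𝓖.dualGrad δ ψ x‖) ≤ r) ∧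
      ∃ i, c / 8 ≤ (ψ : StrongDual ℝ F) (γ i) := by
  have hC₁_pos : 0 < C₁ := zero_lt_one.trans_le hC₁
  obtain ⟨η, hη, hη_le⟩ : ∃ η > 0, η * C₁ ≤ min (r / 2) (min 1 (c / 48)) :=
    ⟨min (r / 2) (min 1 (c / 48)) / C₁, by positivity, (div_mul_cancel₀ _ hC₁_pos.ne').le⟩
  obtain ⟨hηr, hη_one, hηc⟩ : η * C₁ ≤ r / 2 ∧ η * C₁ ≤ 1 ∧ η * C₁ ≤ c / 48 := by
    simpa only [le_min_iff] using hη_le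
  have hη_self : η ≤ η * C₁ := le_mul_of_one_le_right hη.le hC₁
  have hη_mass (i : ι) : η * μ i 1 ≤ η * C₁ := mul_le_mul_of_nonneg_left (hμ_one i) hη.le
  obtain ⟨A, ε, hε, hA⟩ := hg.exists_localization hδ (zero_le_one.trans hC) hgC hη
  obtain ⟨φ, hφ, hφA, hφμ, i, hi, hφi⟩ := exists_dualSmooth_energy_le (𝓖 := 𝓖) hδ hc hΛ hγ hμ
    hμ_one hC₁_pos hμg A hε (t := r / 4) (by positivity)
  obtain ⟨Φ, hψ_add, hψ_le, hΦ_norm, hΦ⟩ := hA φ hφ hφA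
  refine ⟨C • φ - Φ, fun x => (hψ_add x).trans (by linarith), ?_, i, ?_⟩
  · filter_upwards [hφμ] with j hj
    calc (μ j fun x => ‖𝓖.dualGrad δ (C • φ - Φ) x‖)
        ≤ C * (μ j fun x => ‖𝓖.dualGrad δ φ x‖) + η * μ j 1 := map_le_mul_map_add (hμ j) hψ_le
      _ ≤ 2 * (r / 4) + r / 2 := by
          gcongr
          · exact (map_zero (μ j)).symm.trans_le (hμ j fun x => norm_nonneg _)
          · exact (hη_mass j).trans hηr
      _ = r := by ring
  · have hΦγ : |(Φ : StrongDual ℝ F) (γ i)| ≤ c / 8 := by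
      calc |(Φ : StrongDual ℝ F) (γ i)|
          ≤ (μ i fun x => g x + η) + c / 48 * ‖(Φ : StrongDual ℝ F)‖ := hμ_hajlasz i Φ _ hΦ
        _ ≤ 1 * μ i g + η * μ i 1 + c / 48 * ‖(Φ : StrongDual ℝ F)‖ := by
            gcongr
            exact map_le_mul_map_add (hμ i) fun x => by rw [one_mul]
        _ ≤ 1 * (c / 24) + c / 48 + c / 48 * (2 + 1) := by
            gcongr
            · exact hi
            · exact (hη_mass i).trans hηc
            · exact hΦ_norm.trans (add_le_add hC_two (hη_self.trans hη_one))
        _ = c / 8 := by ring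
    rw [Submodule.coe_sub, Submodule.coe_smul, sub_apply, smul_apply, smul_eq_mul]
    nlinarith [(abs_le.1 hΦγ).2]

include hδ hc hΛ hγ hμ hμ_one in
theorem exists_isWUC_of_hajlasz (𝓖 : GradientStructure M V) (hC₁ : 1 ≤ C₁)
    (hμ_hajlasz : ∀ i (Φ : StrongDual ℝ F) (h : M → ℝ),
      IsHajlaszGradient (fun x => Φ (δ x)) h → |Φ (γ i)| ≤ μ i h + c / 48 * ‖Φ‖) :
    ∃ ψ : ℕ → StrongDual ℝ F, IsWUC ψ ∧ ∀ n, ∃ i, c / 8 ≤ ψ n (γ i) := by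
  let Good (n : ℕ) (g : M → ℝ) : Prop := 𝓖.IsBumpApproximable g ∧
    (∀ x, g x ≤ 2 - (1 / 2) ^ n) ∧ ∀ᶠ i in 𝒰, μ i g ≤ c / 24 * (1 - (1 / 2) ^ n)
  obtain ⟨ψ, hψ⟩ := exists_seq_sum_range (Good := Good)
    (P := fun ψ : 𝓖.dualSmooth δ => ∃ i, c / 8 ≤ (ψ : StrongDual ℝ F) (γ i))
    (w := fun ψ x => ‖𝓖.dualGrad δ ψ x‖)
    ⟨isBumpApproximable_zero, by norm_num, by simp⟩ (by
      rintro n g ⟨hg, hg_le, hμg⟩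
      have hp : (0 : ℝ) < (1 / 2) ^ n := by positivity
      have hp_one : ((1 : ℝ) / 2) ^ n ≤ 1 := pow_le_one₀ (by norm_num) (by norm_num)
      obtain ⟨ψ, hψ_add, hψμ, hψ_large⟩ := exists_dualSmooth_norm_add_le hδ hc hΛ hγ hμ hμ_one
        hC₁ hμ_hajlasz hg (by linarith) (by linarith) hg_le
        (hμg.mono fun i hi => hi.trans (mul_le_of_le_one_right (by positivity) (by linarith)))
        (r := min ((1 / 2) ^ n / 2) (c / 24 * ((1 / 2) ^ n / 2))) (by positivity)
      refine ⟨ψ, hψ_large, hg.add (isBumpApproximable_norm_grad ψ.2), fun x => ?_, ?_⟩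
      · have := (hψ_add x).trans (add_le_add_right (min_le_left _ _) _)
        rw [Pi.add_apply, pow_succ]
        linarith
      · filter_upwards [hμg, hψμ] with i hi hψi
        have := hψi.trans (min_le_right _ _)
        rw [map_add, pow_succ]
        linarith)
  refine ⟨fun n => ψ n, isWUC_of_sum_norm_dualGrad_le hδ (C := 2) fun n x => ?_,
    fun n => (hψ n).1⟩
  have := (hψ n).2.2.1 x
  rw [Finset.sum_apply] at this
  exact this.trans (sub_le_self _ (by positivity))

end Blocks

theorem hasPropertyVStar {F : Type*} [NormedAddCommGroup F] [NormedSpace ℝ F] [CompleteSpace F]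
    {o : M} {δ : M → F} (𝓖 : GradientStructure M V) (hδ : IsLipschitzFree o δ) :
    HasPropertyVStar F := by
  intro Γ hΓ
  by_contra hcpt
  obtain ⟨Λ, c, 𝒰, hc, hΛ, hγ⟩ := exists_bidual_of_not_relWeaklyCompact hΓ.isBounded hcpt
  obtain ⟨C, hC_one, hC⟩ : ∃ C ≥ 1, ∀ γ : Γ, ‖(γ : F)‖ ≤ C := by
    obtain ⟨C, hC⟩ := hΓ.isBounded.exists_norm_le
    exact ⟨max C 1, le_max_right _ _, fun γ => (hC γ γ.2).trans (le_max_left _ _)⟩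
  choose μ hμ hμ_one hμ_hajlasz using fun γ : Γ =>
    hδ.exists_hajlasz_bound (zero_lt_one.trans_le hC_one) (κ := c / 48) (by positivity) (hC γ)
  obtain ⟨ψ, hψ_wuc, hψ_large⟩ := exists_isWUC_of_hajlasz hδ hc hΛ hγ hμ hμ_one 𝓖
    (by linarith) hμ_hajlasz
  obtain ⟨n, hn⟩ := (hΓ _ hψ_wuc (c / 16) (by positivity)).exists
  obtain ⟨γ, hγψ⟩ := hψ_large n
  linarith [(le_abs_self _).trans (hn γ γ.2)]

end GradientStructure

/-! ### Horizontal curves -/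

theorem lipschitzOnWith_integral_of_norm_le {W : Type*} [NormedAddCommGroup W] [NormedSpace ℝ W]
    {b : ℝ} {v : ℝ → W} (hv : MeasureTheory.IntegrableOn v (Icc 0 b)) {K : NNReal}
    (hK : ∀ u ∈ Icc 0 b, ‖v u‖ ≤ K) :
    LipschitzOnWith K (fun t => ∫ u in (0 : ℝ)..t, v u) (Icc 0 b) := by
  have hint : ∀ t ∈ Icc 0 b, IntervalIntegrable v MeasureTheory.volume 0 t := fun t ht => by
    rw [intervalIntegrable_iff_integrableOn_Icc_of_le ht.1]
    exact hv.mono_set (Icc_subset_Icc_right ht.2)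
  refine LipschitzOnWith.of_dist_le_mul fun s hs t ht => ?_
  rw [dist_eq_norm, intervalIntegral.integral_interval_sub_left (hint s hs) (hint t ht),
    Real.dist_eq]
  exact intervalIntegral.norm_integral_le_of_norm_le_const fun x hx =>
    hK x (ordConnected_Icc.uIcc_subset ht hs (uIoc_subset_uIcc hx))

theorem eq_add_integral_of_ae_hasDerivAt {W : Type*} [NormedAddCommGroup W] [NormedSpace ℝ W]
    [CompleteSpace W] {b : ℝ} {γ v : ℝ → W} {K L : NNReal} (hγ : LipschitzOnWith L γ (Icc 0 b))
    (hv : MeasureTheory.IntegrableOn v (Icc 0 b)) (hK : ∀ u ∈ Icc 0 b, ‖v u‖ ≤ K)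
    (hd : ∀ᵐ t : ℝ, t ∈ Icc 0 b → HasDerivAt γ (v t) t) {t : ℝ} (ht : t ∈ Icc 0 b) :
    γ t = γ 0 + ∫ u in (0 : ℝ)..t, v u := by
  have hb : 0 ≤ b := ht.1.trans ht.2
  have hint := (intervalIntegrable_iff_integrableOn_Icc_of_le hb).2 hv
  have hac : AbsolutelyContinuousOnInterval (fun t => γ t - ∫ u in (0 : ℝ)..t, v u) 0 b := by
    have := hγ.sub (lipschitzOnWith_integral_of_norm_le hv hK)
    rw [← uIcc_of_le hb] at this
    exact this.absolutelyContinuousOnInterval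
  obtain ⟨C, hC⟩ := hac.const_of_ae_hasDerivAt_zero (by
    filter_upwards [hd, hint.ae_hasDerivAt_integral] with x hx hx' hmem
    have hsub := (hx (uIcc_of_le hb ▸ hmem)).sub (hx' hmem 0 left_mem_uIcc)
    rwa [sub_self] at hsub)
  rw [uIcc_of_le hb] at hC
  have h0 := hC 0 ⟨le_rfl, hb⟩
  rw [intervalIntegral.integral_same, sub_zero] at h0
  rw [h0, ← hC t ht, sub_add_cancel]

theorem exists_lipschitzOnWith_comp_of_contDiff {V W : Type*} [NormedAddCommGroup V]
    [NormedSpace ℝ V] [NormedAddCommGroup W] [NormedSpace ℝ W] {f : V → W} (hf : ContDiff ℝ 1 f)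
    {γ : ℝ → V} {I : Set ℝ} (hI : IsCompact I) (hγ : ∃ K, LipschitzOnWith K γ I) :
    ∃ K, LipschitzOnWith K (fun t => f (γ t)) I := by
  obtain ⟨K, hK⟩ := hγ
  obtain ⟨L, hL⟩ := hf.locallyLipschitz.locallyLipschitzOn.exists_lipschitzOnWith_of_compact
    (hI.image_of_continuousOn hK.continuousOn)
  exact ⟨L * K, hL.comp hK (mapsTo_image γ I)⟩

namespace CCData

variable {d s : ℕ} {S : CCData d s} {b : ℝ} {γ : ℝ → Euc d} {c : Fin s → ℝ → ℝ}

theorem continuousOn_X (S : CCData d s) (j : Fin s) : ContinuousOn (S.X j) S.G := fun x hx => by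
  obtain ⟨U, hU, K, hK⟩ := S.locallyLipschitz_X j x hx
  exact (hK.continuousOn.continuousAt hU).continuousWithinAt

theorem norm_control_le_one (hc : ∀ t ∈ Icc 0 b, ∑ j, c j t ^ 2 ≤ 1) (j : Fin s) {t : ℝ}
    (ht : t ∈ Icc 0 b) : ‖c j t‖ ≤ 1 := by
  rw [Real.norm_eq_abs, ← sq_le_one_iff_abs_le_one]
  exact (Finset.single_le_sum (f := fun j => c j t ^ 2) (fun i _ => sq_nonneg _)
    (Finset.mem_univ j)).trans (hc t ht)

theorem exists_norm_velocity_le (hγ : ContinuousOn γ (Icc 0 b)) (hG : MapsTo γ (Icc 0 b) S.G)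
    (hc : ∀ t ∈ Icc 0 b, ∑ j, c j t ^ 2 ≤ 1) :
    ∃ K : NNReal, ∀ t ∈ Icc 0 b, ‖∑ j, c j t • S.X j (γ t)‖ ≤ K := by
  choose C hC using fun j => isCompact_Icc.exists_bound_of_continuousOn
    ((S.continuousOn_X j).comp hγ hG)
  refine ⟨(∑ j, C j).toNNReal, fun t ht => ?_⟩
  refine ((norm_sum_le _ _).trans (Finset.sum_le_sum fun j _ => ?_)).trans (Real.le_coe_toNNReal _)
  rw [norm_smul]
  exact (mul_le_of_le_one_left (norm_nonneg _) (norm_control_le_one hc j ht)).trans (hC j t ht)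

theorem integrableOn_velocity (hγ : ContinuousOn γ (Icc 0 b)) (hG : MapsTo γ (Icc 0 b) S.G)
    (hm : ∀ j, Measurable (c j)) (hc : ∀ t ∈ Icc 0 b, ∑ j, c j t ^ 2 ≤ 1) :
    MeasureTheory.IntegrableOn (fun t => ∑ j, c j t • S.X j (γ t)) (Icc 0 b) := by
  obtain ⟨K, hK⟩ := exists_norm_velocity_le hγ hG hc
  refine MeasureTheory.IntegrableOn.of_bound (by simp)
    (Finset.aestronglyMeasurable_fun_sum _ fun j _ => (hm j).aestronglyMeasurable.smul
      (((S.continuousOn_X j).comp hγ hG).aestronglyMeasurable measurableSet_Icc)) K ?_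
  rw [MeasureTheory.ae_restrict_iff' measurableSet_Icc]
  exact Eventually.of_forall hK

/-- Admissible curves are the Lipschitz curves which solve the control equation almost
everywhere; this form is stable under composition with smooth maps. -/
theorem admissible_iff : S.Admissible b γ ↔ 0 ≤ b ∧ MapsTo γ (Icc 0 b) S.G ∧
    (∃ K, LipschitzOnWith K γ (Icc 0 b)) ∧ ∃ c : Fin s → ℝ → ℝ, (∀ j, Measurable (c j)) ∧
      (∀ t ∈ Icc 0 b, ∑ j, c j t ^ 2 ≤ 1) ∧
      ∀ᵐ t : ℝ, t ∈ Icc 0 b → HasDerivAt γ (∑ j, c j t • S.X j (γ t)) t := by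
  constructor
  · rintro ⟨hb, hG, c, hm, hc, hint, heq⟩
    have hint' := (intervalIntegrable_iff_integrableOn_Icc_of_le hb).2 hint
    have hcont : ContinuousOn γ (Icc 0 b) := by
      have := intervalIntegral.continuousOn_primitive_interval (by rwa [uIcc_of_le hb])
      rw [uIcc_of_le hb] at this
      exact (continuousOn_const.add this).congr heq
    obtain ⟨K, hK⟩ := exists_norm_velocity_le hcont hG hc
    refine ⟨hb, hG, ⟨K, LipschitzOnWith.of_dist_le_mul fun s hs t ht => ?_⟩, c, hm, hc, ?_⟩
    · rw [heq s hs, heq t ht, dist_add_left]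
      exact (lipschitzOnWith_integral_of_norm_le hint hK).dist_le_mul s hs t ht
    have hne (a : ℝ) : ∀ᵐ t : ℝ, t ≠ a := by simp [MeasureTheory.ae_iff]
    filter_upwards [hint'.ae_hasDerivAt_integral, hne 0, hne b] with t ht h0 hb' hmem
    rw [uIcc_of_le hb] at ht
    refine ((ht hmem 0 ⟨le_rfl, hb⟩).const_add (γ 0)).congr_of_eventuallyEq ?_
    filter_upwards [Ioo_mem_nhds (hmem.1.lt_of_ne' h0) (hmem.2.lt_of_ne hb')] with u hu
    exact heq u (Ioo_subset_Icc_self hu)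
  · rintro ⟨hb, hG, ⟨L, hL⟩, c, hm, hc, hd⟩
    obtain ⟨K, hK⟩ := exists_norm_velocity_le hL.continuousOn hG hc
    have hint := integrableOn_velocity hL.continuousOn hG hm hc
    exact ⟨hb, hG, c, hm, hc, hint, fun t ht => eq_add_integral_of_ae_hasDerivAt hL hint hK hd ht⟩

theorem Admissible.subinterval (h : S.Admissible b γ) {p q : ℝ} (hp : 0 ≤ p) (hpq : p ≤ q)
    (hq : q ≤ b) : S.Admissible (q - p) fun t => γ (t + p) := by
  obtain ⟨-, hG, ⟨K, hK⟩, c, hm, hc, hd⟩ := admissible_iff.1 h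
  have hmem : MapsTo (· + p) (Icc 0 (q - p)) (Icc 0 b) := fun t ht =>
    ⟨by linarith [ht.1], by linarith [ht.2]⟩
  refine admissible_iff.2 ⟨sub_nonneg.2 hpq, hG.comp hmem, ⟨K, ?_⟩, fun j t => c j (t + p),
    fun j => (hm j).comp (measurable_id.add_const p), fun t ht => hc _ (hmem ht), ?_⟩
  · rw [← mul_one K]
    exact hK.comp (isometry_add_right p).lipschitz.lipschitzOnWith hmem
  · filter_upwards [(MeasureTheory.measurePreserving_add_right MeasureTheory.volume
      p).quasiMeasurePreserving.ae hd] with t ht htm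
    exact (ht (hmem htm)).comp_add_const t p

/-- The horizontal gradient `(X₁ f, …, X_s f)`. -/
def hgrad (S : CCData d s) (f : Euc d → ℝ) (x : Euc d) : EuclideanSpace ℝ (Fin s) :=
  WithLp.toLp 2 fun j => fderiv ℝ f x (S.X j x)

theorem fderiv_sum_smul_X (f : Euc d → ℝ) (x : Euc d) (a : Fin s → ℝ) :
    fderiv ℝ f x (∑ j, a j • S.X j x) = inner ℝ (S.hgrad f x) (WithLp.toLp 2 a) := by
  simp [hgrad, map_sum, PiLp.inner_apply]

theorem hgrad_const (S : CCData d s) (a : ℝ) : S.hgrad (fun _ => a) = 0 := by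
  ext x j
  simp [hgrad]

theorem hgrad_add (S : CCData d s) {f g : Euc d → ℝ} (hf : Differentiable ℝ f)
    (hg : Differentiable ℝ g) : S.hgrad (f + g) = S.hgrad f + S.hgrad g := by
  ext x j
  simp [hgrad, fderiv_add (hf x) (hg x)]

theorem hgrad_smul (S : CCData d s) (a : ℝ) (f : Euc d → ℝ) :
    S.hgrad (a • f) = a • S.hgrad f := by
  ext x j
  simp [hgrad, fderiv_const_smul_field]

theorem hgrad_mul (S : CCData d s) {f g : Euc d → ℝ} (hf : Differentiable ℝ f)
    (hg : Differentiable ℝ g) (x : Euc d) :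
    S.hgrad (f * g) x = f x • S.hgrad g x + g x • S.hgrad f x := by
  ext j
  simp [hgrad, fderiv_mul (hf x) (hg x)]

theorem hasCompactSupport_hgrad (S : CCData d s) {f : Euc d → ℝ}
    (hf : HasCompactSupport (fderiv ℝ f)) : HasCompactSupport (S.hgrad f) := by
  refine hf.mono fun x hx h0 => hx ?_
  ext j
  simp [hgrad, h0]

theorem Admissible.abs_sub_le (h : S.Admissible b γ) {f : Euc d → ℝ} (hf : ContDiff ℝ 1 f) {C : ℝ}
    (hC : ∀ x, ‖S.hgrad f x‖ ≤ C) : |f (γ b) - f (γ 0)| ≤ C * b := by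
  obtain ⟨hb, -, hK, c, -, hc, hd⟩ := admissible_iff.1 h
  obtain ⟨L, hL⟩ := exists_lipschitzOnWith_comp_of_contDiff hf isCompact_Icc hK
  have hderiv : ∀ᵐ t : ℝ, t ∈ Ioc 0 b → ‖deriv (fun t => f (γ t)) t‖ ≤ C := by
    filter_upwards [hd] with t ht htm
    have htm := Ioc_subset_Icc_self htm
    have hcomp := (hf.differentiable one_ne_zero (γ t)).hasFDerivAt.comp_hasDerivAt t (ht htm)
    rw [show deriv (fun t => f (γ t)) t = _ from hcomp.deriv, fderiv_sum_smul_X]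
    refine (norm_inner_le_norm _ _).trans
      ((mul_le_of_le_one_right (norm_nonneg _) ?_).trans (hC _))
    rw [EuclideanSpace.norm_eq, Real.sqrt_le_one]
    simpa using hc t htm
  rw [← uIcc_of_le hb] at hL
  rw [← hL.absolutelyContinuousOnInterval.integral_deriv_eq_sub, ← Real.norm_eq_abs]
  rw [← uIoc_of_le hb] at hderiv
  simpa [abs_of_nonneg hb] using intervalIntegral.norm_integral_le_of_norm_le_const_ae hderiv

end CCData

/-! ### Calculus on the group -/

namespace LieGroupData

variable {d s : ℕ} (Gd : LieGroupData d)

/-- The group structure underlying `Gd`, on the type `Euc d` (not an instance, since `Euc d` is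
already an additive group). -/
abbrev toGroup : Group (Euc d) :=
  letI : Mul (Euc d) := ⟨Gd.mul⟩
  letI : One (Euc d) := ⟨Gd.one⟩
  letI : Inv (Euc d) := ⟨Gd.inv⟩
  Group.ofLeftAxioms Gd.mul_assoc Gd.one_mul Gd.inv_mul

theorem mul_inv (x : Euc d) : Gd.mul x (Gd.inv x) = Gd.one :=
  letI := Gd.toGroup
  mul_inv_cancel x

theorem inv_one : Gd.inv Gd.one = Gd.one :=
  letI := Gd.toGroup
  _root_.inv_one

theorem inv_mul_rev (x y : Euc d) : Gd.inv (Gd.mul x y) = Gd.mul (Gd.inv y) (Gd.inv x) :=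
  letI := Gd.toGroup
  mul_inv_rev x y

theorem contDiff_uncurry_mul : ContDiff ℝ (⊤ : ℕ∞) (Function.uncurry Gd.mul) :=
  Gd.smooth_mul

theorem contDiff_mul_left (x : Euc d) : ContDiff ℝ (⊤ : ℕ∞) (Gd.mul x) :=
  Gd.smooth_mul.comp (contDiff_const.prodMk contDiff_id)

theorem contDiff_mul_right (y : Euc d) : ContDiff ℝ (⊤ : ℕ∞) fun x => Gd.mul x y :=
  Gd.smooth_mul.comp (contDiff_id.prodMk contDiff_const)

theorem contDiff_conj (x : Euc d) :
    ContDiff ℝ (⊤ : ℕ∞) fun y => Gd.mul (Gd.mul x y) (Gd.inv x) :=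
  (Gd.contDiff_mul_right _).comp (Gd.contDiff_mul_left x)

theorem fderiv_uncurry_mul_inr (x y v : Euc d) :
    fderiv ℝ (Function.uncurry Gd.mul) (x, y) (0, v) = fderiv ℝ (Gd.mul x) y v := by
  have h := (Gd.contDiff_uncurry_mul.differentiable (by simp) (x, y)).hasFDerivAt.comp y
    (hasFDerivAt_prodMk_right x y)
  rw [show fderiv ℝ (Gd.mul x) y = _ from h.fderiv]
  simp

theorem fderiv_uncurry_mul_inl (x y v : Euc d) :
    fderiv ℝ (Function.uncurry Gd.mul) (x, y) (v, 0) = fderiv ℝ (fun x => Gd.mul x y) x v := by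
  have h := (Gd.contDiff_uncurry_mul.differentiable (by simp) (x, y)).hasFDerivAt.comp
    (f := fun x => (x, y)) x (hasFDerivAt_prodMk_left x y)
  rw [show fderiv ℝ (fun x => Gd.mul x y) x = _ from h.fderiv]
  simp

theorem fderiv_uncurry_mul_one (u v : Euc d) :
    fderiv ℝ (Function.uncurry Gd.mul) (Gd.one, Gd.one) (u, v) = u + v := by
  rw [← Prod.fst_add_snd (u, v), map_add, fderiv_uncurry_mul_inl, fderiv_uncurry_mul_inr]
  simp only [Gd.mul_one, funext Gd.one_mul, fderiv_fun_id, ContinuousLinearMap.id_apply]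

theorem contDiff_lvf (v : Euc d) : ContDiff ℝ (⊤ : ℕ∞) (Gd.lvf v) :=
  (Gd.contDiff_uncurry_mul.fderiv contDiff_const (by simp)).clm_apply contDiff_const

@[simp]
theorem lvf_one (v : Euc d) : Gd.lvf v Gd.one = v := by
  simp [lvf, funext Gd.one_mul]

theorem lvf_sum_smul (c : Fin s → ℝ) (v : Fin s → Euc d) (x : Euc d) :
    Gd.lvf (∑ j, c j • v j) x = ∑ j, c j • Gd.lvf (v j) x := by
  simp [lvf, map_sum]

theorem fderiv_mul_lvf (a v x : Euc d) :
    fderiv ℝ (Gd.mul a) x (Gd.lvf v x) = Gd.lvf v (Gd.mul a x) := by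
  have hcomp : Gd.mul (Gd.mul a x) = Gd.mul a ∘ Gd.mul x := funext fun y => Gd.mul_assoc a x y
  have hdiff (y z : Euc d) : DifferentiableAt ℝ (Gd.mul y) z :=
    (Gd.contDiff_mul_left y).differentiable (by simp) z
  rw [lvf, lvf, hcomp, fderiv_comp _ (hdiff _ _) (hdiff _ _), Gd.mul_one]
  rfl

/-- The adjoint representation of the group on its Lie algebra `Euc d`. -/
def Ad (x : Euc d) : Euc d →L[ℝ] Euc d :=
  fderiv ℝ (fun y => Gd.mul (Gd.mul x y) (Gd.inv x)) Gd.one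

theorem hasStrictFDerivAt_conj (x : Euc d) :
    HasStrictFDerivAt (fun y => Gd.mul (Gd.mul x y) (Gd.inv x)) (Gd.Ad x) Gd.one :=
  (Gd.contDiff_conj x).contDiffAt.hasStrictFDerivAt (by simp)

theorem contDiff_Ad (v : Euc d) : ContDiff ℝ (⊤ : ℕ∞) fun x => Gd.Ad x v := by
  have h : ContDiff ℝ (⊤ : ℕ∞)
      (Function.uncurry fun x y => Gd.mul (Gd.mul x y) (Gd.inv x)) :=
    Gd.smooth_mul.comp (Gd.smooth_mul.prodMk (Gd.smooth_inv.comp contDiff_fst))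
  exact (h.fderiv contDiff_const (by simp)).clm_apply contDiff_const

theorem Ad_one (v : Euc d) : Gd.Ad Gd.one v = v := by
  simp [Ad, Gd.one_mul, Gd.inv_one, Gd.mul_one]

theorem Ad_mul (x y v : Euc d) : Gd.Ad (Gd.mul x y) v = Gd.Ad x (Gd.Ad y v) := by
  have hx : HasFDerivAt (fun z => Gd.mul (Gd.mul x z) (Gd.inv x)) (Gd.Ad x)
      (Gd.mul (Gd.mul y Gd.one) (Gd.inv y)) := by
    rw [Gd.mul_one, Gd.mul_inv]
    exact (Gd.hasStrictFDerivAt_conj x).hasFDerivAt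
  have h := hx.comp Gd.one (Gd.hasStrictFDerivAt_conj y).hasFDerivAt
  simp only [Function.comp_def] at h
  simp only [Ad, Gd.inv_mul_rev, ← Gd.mul_assoc] at h ⊢
  rw [h.fderiv]
  rfl

theorem fderiv_mul_right_Ad (x v : Euc d) :
    fderiv ℝ (fun y => Gd.mul y x) Gd.one (Gd.Ad x v) = Gd.lvf v x := by
  have hR : HasFDerivAt (fun y => Gd.mul y x) (fderiv ℝ (fun y => Gd.mul y x) Gd.one)
      (Gd.mul (Gd.mul x Gd.one) (Gd.inv x)) := by
    rw [Gd.mul_one, Gd.mul_inv]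
    exact ((Gd.contDiff_mul_right x).differentiable (by simp) _).hasFDerivAt
  have h := hR.comp Gd.one (Gd.hasStrictFDerivAt_conj x).hasFDerivAt
  simp only [Function.comp_def, Gd.mul_assoc, Gd.inv_mul, Gd.mul_one] at h
  rw [lvf, show fderiv ℝ (Gd.mul x) Gd.one = _ from h.fderiv]
  rfl

theorem hasFDerivAt_fderiv_uncurry_mul (p : Euc d × Euc d) :
    HasFDerivAt (fderiv ℝ (Function.uncurry Gd.mul))
      (fderiv ℝ (fderiv ℝ (Function.uncurry Gd.mul)) p) p :=
  ((Gd.contDiff_uncurry_mul.fderiv_right (m := (⊤ : ℕ∞)) (by simp)).differentiable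
    (by simp) p).hasFDerivAt

theorem fderiv_lvf (v w : Euc d) : fderiv ℝ (Gd.lvf w) Gd.one v =
    fderiv ℝ (fderiv ℝ (Function.uncurry Gd.mul)) (Gd.one, Gd.one) (v, 0) (0, w) := by
  have h := ((Gd.hasFDerivAt_fderiv_uncurry_mul (Gd.one, Gd.one)).comp
    (f := fun x => (x, Gd.one)) Gd.one (hasFDerivAt_prodMk_left Gd.one Gd.one)).clm_apply
      (hasFDerivAt_const ((0 : Euc d), w) Gd.one)
  have hlvf : Gd.lvf w = fun x => fderiv ℝ (Function.uncurry Gd.mul) (x, Gd.one) (0, w) :=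
    funext fun x => (Gd.fderiv_uncurry_mul_inr x Gd.one w).symm
  rw [hlvf, show fderiv ℝ (fun x => fderiv ℝ (Function.uncurry Gd.mul) (x, Gd.one) (0, w)) Gd.one
    = _ from h.fderiv]
  simp

theorem fderiv_Ad (v w : Euc d) : fderiv ℝ (fun x => Gd.Ad x w) Gd.one v = Gd.bracket v w := by
  set B := fderiv ℝ (fderiv ℝ (Function.uncurry Gd.mul)) (Gd.one, Gd.one) with hB
  have hsymm (p q : Euc d × Euc d) : B p q = B q p :=
    Gd.contDiff_uncurry_mul.contDiffAt.isSymmSndFDerivAt (by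
      rw [minSmoothness_of_isRCLikeNormedField]
      exact WithTop.coe_le_coe.2 le_top) p q
  have hAd : HasFDerivAt (fun x => Gd.Ad x w) (fderiv ℝ (fun x => Gd.Ad x w) Gd.one) Gd.one :=
    ((Gd.contDiff_Ad w).differentiable (by simp) _).hasFDerivAt
  have h := ((Gd.hasFDerivAt_fderiv_uncurry_mul (Gd.one, Gd.one)).comp Gd.one
    (hasFDerivAt_prodMk_right Gd.one Gd.one)).clm_apply
      (hAd.prodMk (hasFDerivAt_const (0 : Euc d) Gd.one))
  have hlvf : Gd.lvf w =
      fun x => fderiv ℝ (Function.uncurry Gd.mul) (Gd.one, x) (Gd.Ad x w, 0) :=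
    funext fun x => by rw [fderiv_uncurry_mul_inl, fderiv_mul_right_Ad]
  have hdiff : fderiv ℝ (Gd.lvf w) Gd.one v =
      fderiv ℝ (fun x => Gd.Ad x w) Gd.one v + B (0, v) (w, 0) := by
    rw [hlvf, show fderiv ℝ (fun x => fderiv ℝ (Function.uncurry Gd.mul) (Gd.one, x)
      (Gd.Ad x w, 0)) Gd.one = _ from h.fderiv]
    simp [fderiv_uncurry_mul_one, Ad_one, hB]
  rw [bracket, vfBracket, lvf_one, lvf_one, hdiff, Gd.fderiv_lvf w v, ← hB, hsymm,
    add_sub_cancel_right]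

theorem hasStrictFDerivAt_mul {W : Type*} [NormedAddCommGroup W] [NormedSpace ℝ W]
    {f g : W → Euc d} {A B : W →L[ℝ] Euc d} {w : W} (hf : HasStrictFDerivAt f A w)
    (hg : HasStrictFDerivAt g B w) (hf1 : f w = Gd.one) (hg1 : g w = Gd.one) :
    HasStrictFDerivAt (fun w => Gd.mul (f w) (g w)) (A + B) w := by
  have hmul : HasStrictFDerivAt (Function.uncurry Gd.mul)
      (fderiv ℝ (Function.uncurry Gd.mul) (Gd.one, Gd.one)) (f w, g w) := by
    rw [hf1, hg1]
    exact Gd.contDiff_uncurry_mul.contDiffAt.hasStrictFDerivAt (by simp)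
  refine (hmul.comp w (hf.prodMk hg)).congr_fderiv ?_
  ext1 v
  exact Gd.fderiv_uncurry_mul_one (A v) (B v)

theorem exists_integralCurve (v : Euc d) : ∃ (k : ℝ → Euc d) (τ : ℝ), 0 < τ ∧ k 0 = Gd.one ∧
    ∀ t ∈ Ioo (-τ) τ, HasDerivAt k (Gd.lvf v (k t)) t := by
  obtain ⟨k, hk0, τ, hτ, hk⟩ :=
    ContDiffAt.exists_forall_mem_closedBall_exists_eq_forall_mem_Ioo_hasDerivAt₀
      (((Gd.contDiff_lvf v).of_le (by exact_mod_cast le_top)).contDiffAt (x := Gd.one)) 0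
  exact ⟨k, τ, hτ, hk0, by simpa using hk⟩

theorem hasStrictDerivAt_integralCurve {v : Euc d} {k : ℝ → Euc d} {τ : ℝ} (hτ : 0 < τ)
    (hk0 : k 0 = Gd.one) (hk : ∀ t ∈ Ioo (-τ) τ, HasDerivAt k (Gd.lvf v (k t)) t) :
    HasStrictDerivAt k v 0 := by
  have h0 : (0 : ℝ) ∈ Ioo (-τ) τ := ⟨neg_neg_of_pos hτ, hτ⟩
  rw [← Gd.lvf_one v, ← hk0]
  exact hasStrictDerivAt_of_hasDerivAt_of_continuousAt
    (eventually_of_mem (Ioo_mem_nhds h0.1 h0.2) hk)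
    ((Gd.contDiff_lvf v).continuous.continuousAt.comp (hk 0 h0).continuousAt)

/-- The left-invariant Carnot–Carathéodory structure on the group in which `X₁, …, X_s` span the
horizontal directions at the identity. -/
def ccData (Xb : Fin s → Euc d) : CCData d s where
  G := univ
  X j := Gd.lvf (Xb j)
  isOpen_G := isOpen_univ
  isConnected_G := isConnected_univ
  locallyLipschitz_X j x _ := by
    obtain ⟨K, U, hU, hK⟩ := ((Gd.contDiff_lvf (Xb j)).of_le
      (by exact_mod_cast le_top)).contDiffAt (x := x).exists_lipschitzOnWith
    exact ⟨U, hU, K, hK⟩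

section ccData

variable {Gd} {Xb : Fin s → Euc d}

theorem admissible_mul_left {b : ℝ} {γ : ℝ → Euc d} (h : (Gd.ccData Xb).Admissible b γ)
    (a : Euc d) : (Gd.ccData Xb).Admissible b fun t => Gd.mul a (γ t) := by
  obtain ⟨hb, -, hK, c, hm, hc, hd⟩ := CCData.admissible_iff.1 h
  refine CCData.admissible_iff.2 ⟨hb, mapsTo_univ _ _, exists_lipschitzOnWith_comp_of_contDiff
    ((Gd.contDiff_mul_left a).of_le (by exact_mod_cast le_top)) isCompact_Icc hK, c, hm, hc, ?_⟩
  filter_upwards [hd] with t ht htm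
  simp only [ccData, ← lvf_sum_smul] at ht ⊢
  rw [← fderiv_mul_lvf]
  exact ((Gd.contDiff_mul_left a).differentiable (by simp) (γ t)).hasFDerivAt.comp_hasDerivAt t
    (ht htm)

theorem admissible_of_hasDerivAt {c : Fin s → ℝ} (hc : ∑ j, c j ^ 2 ≤ 1) {b : ℝ} (hb : 0 ≤ b)
    {γ : ℝ → Euc d}
    (hγ : ∀ t ∈ Icc 0 b, HasDerivAt γ (Gd.lvf (∑ j, c j • Xb j) (γ t)) t) :
    (Gd.ccData Xb).Admissible b γ := by
  simp only [lvf_sum_smul] at hγ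
  have hint : MeasureTheory.IntegrableOn (fun t => ∑ j, c j • (Gd.ccData Xb).X j (γ t))
      (Icc 0 b) :=
    CCData.integrableOn_velocity (fun t ht => (hγ t ht).continuousAt.continuousWithinAt)
      (mapsTo_univ _ _) (fun _ => measurable_const) fun _ _ => hc
  refine ⟨hb, fun _ _ => mem_univ _, fun j _ => c j, fun _ => measurable_const, fun _ _ => hc,
    hint, fun t ht => ?_⟩
  rw [intervalIntegral.integral_eq_sub_of_hasDerivAt (f := γ), add_sub_cancel]
  · exact fun u hu => hγ u (ordConnected_Icc.uIcc_subset ⟨le_rfl, hb⟩ ht hu)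
  · rw [intervalIntegrable_iff_integrableOn_Icc_of_le ht.1]
    exact hint.mono_set (Icc_subset_Icc_right ht.2)

theorem contDiff_hgrad {f : Euc d → ℝ} (hf : ContDiff ℝ (⊤ : ℕ∞) f) :
    ContDiff ℝ (⊤ : ℕ∞) ((Gd.ccData Xb).hgrad f) :=
  (PiLp.contDiff_toLp (p := 2)).comp (contDiff_pi.2 fun _ =>
    (hf.fderiv_right (by simp)).clm_apply (Gd.contDiff_lvf _))

theorem exists_norm_hgrad_le {f : Euc d → ℝ} (hf : ContDiff ℝ (⊤ : ℕ∞) f)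
    (hsupp : HasCompactSupport (fderiv ℝ f)) : ∃ C, ∀ x, ‖(Gd.ccData Xb).hgrad f x‖ ≤ C :=
  ((Gd.ccData Xb).hasCompactSupport_hgrad hsupp).exists_bound_of_continuous
    (contDiff_hgrad hf).continuous

end ccData

/-- The vectors `X₁, …, X_s` generate the Lie algebra: the left-invariant vector fields they
determine satisfy Hörmander's condition. -/
def IsBracketGenerating (Xb : Fin s → Euc d) : Prop :=
  ∀ L : Submodule ℝ (Euc d), (∀ j, Xb j ∈ L) → (∀ j, ∀ z ∈ L, Gd.bracket (Xb j) z ∈ L) → L = ⊤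

variable {Gd}

theorem Stratification.isBracketGenerating {n : ℕ} (strat : Gd.Stratification n)
    {Xb : Fin s → Euc d}
    (hspan : Submodule.span ℝ (Set.range Xb) = strat.V ⟨0, strat.npos⟩) :
    Gd.IsBracketGenerating Xb := by
  intro L hmem hbracket
  have hV₁ : ∀ v ∈ strat.V ⟨0, strat.npos⟩, ∀ z ∈ L, Gd.bracket v z ∈ L := by
    intro v hv z hz
    have hle : Submodule.span ℝ (Set.range Xb) ≤
        L.comap (fderiv ℝ (fun x => Gd.Ad x z) Gd.one).toLinearMap := by
      rw [Submodule.span_le]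
      rintro _ ⟨j, rfl⟩
      simpa [fderiv_Ad] using hbracket j z hz
    simpa [fderiv_Ad] using hle (hspan ▸ hv)
  have hV (m : ℕ) (hm : m < n) : strat.V ⟨m, hm⟩ ≤ L := by
    induction m with
    | zero =>
      rw [← hspan, Submodule.span_le]
      rintro _ ⟨j, rfl⟩
      exact hmem j
    | succ m ih =>
      rw [← strat.bracket_succ ⟨m, by omega⟩ hm, bracketSpan, Submodule.span_le]
      rintro _ ⟨a, ha, b, hb, rfl⟩
      exact hV₁ a ha b (ih (by omega) hb)
  rw [eq_top_iff, ← strat.isInternal.submodule_iSup_eq_top]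
  exact iSup_le fun i => hV i.1 i.2

end LieGroupData

/-! ### Left-invariant metrics -/

section LeftInvariant

variable {M : Type*} [Group M] [PseudoMetricSpace M] [IsIsometricSMul M M]

theorem dist_one_mul_le (x y : M) : dist 1 (x * y) ≤ dist 1 x + dist 1 y := by
  simpa only [← dist_mul_left x 1 y, mul_one] using dist_triangle 1 x (x * y)

theorem dist_one_inv (x : M) : dist 1 x⁻¹ = dist 1 x := by
  rw [← dist_mul_left x 1 x⁻¹, mul_one, mul_inv_cancel, dist_comm]

theorem dist_one_prod_le (l : List M) : dist 1 l.prod ≤ (l.map (dist 1)).sum := by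
  induction l with
  | nil => simp
  | cons x l ih =>
    rw [List.prod_cons, List.map_cons, List.sum_cons]
    exact (dist_one_mul_le x _).trans (by gcongr)

/-- Balls of radius `(n + 1) r` are products of `n + 1` balls of radius `r`. -/
theorem properSpace_of_exists_between [ContinuousMul M] [WeaklyLocallyCompactSpace M]
    (hbetween : ∀ (x y : M) (a b : ℝ), 0 < a → 0 < b → dist x y < a + b →
      ∃ z, dist x z < a ∧ dist z y < b) : ProperSpace M := by
  obtain ⟨K, hK, hK1⟩ := exists_compact_mem_nhds (1 : M)
  obtain ⟨r, hr, hrK⟩ := Metric.mem_nhds_iff.1 hK1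
  have hball (n : ℕ) : ∃ K' : Set M, IsCompact K' ∧ ball 1 ((n + 1) * r) ⊆ K' := by
    induction n with
    | zero => exact ⟨K, hK, by simpa using hrK⟩
    | succ n ih =>
      obtain ⟨K', hK', hsub⟩ := ih
      refine ⟨_, (hK'.prod hK).image continuous_mul, fun x hx => ?_⟩
      rw [mem_ball'] at hx
      obtain ⟨z, hz, hzx⟩ := hbetween 1 x ((n + 1) * r) r (by positivity) hr
        (hx.trans_eq (by push_cast; ring))
      refine ⟨(z, z⁻¹ * x), ⟨hsub (mem_ball'.2 hz), hrK (mem_ball'.2 ?_)⟩, mul_inv_cancel_left z x⟩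
      rwa [← dist_mul_left z, mul_one, mul_inv_cancel_left]
  refine ProperSpace.of_isCompact_closedBall_of_le 0 fun x R _ => ?_
  obtain ⟨n, hn⟩ := exists_nat_gt (R / r)
  obtain ⟨K', hK', hsub⟩ := hball n
  refine (hK'.image (continuous_const_smul x)).of_isClosed_subset isClosed_closedBall
    fun y hy => ⟨x⁻¹ * y, hsub (mem_ball'.2 ?_), mul_inv_cancel_left x y⟩
  rw [← dist_mul_left x, mul_one, mul_inv_cancel_left]
  refine (mem_closedBall'.1 hy).trans_lt ((div_lt_iff₀ hr).1 hn |>.trans_le ?_)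
  gcongr
  simp

end LeftInvariant

/-! ### Topology of a Carnot–Carathéodory group -/

/-- `e` is a global chart of the metric group `M` which identifies it with the group `Gd`, carrying
the Carnot–Carathéodory metric of the horizontal frame `X₁, …, X_s`; the metric being finite, any
two points are joined by a horizontal curve. -/
structure IsCCChart {d s : ℕ} (Gd : LieGroupData d) (Xb : Fin s → Euc d) {M : Type*} [MetricSpace M]
    [Group M] (e : M ≃ Euc d) : Prop where
  map_mul : ∀ x y, e (x * y) = Gd.mul (e x) (e y)
  dist_eq : ∀ x y, dist x y = (Gd.ccData Xb).ccDist (e x) (e y)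
  connects : (Gd.ccData Xb).Connects

namespace IsCCChart

variable {d s : ℕ} {Gd : LieGroupData d} {Xb : Fin s → Euc d} {M : Type*} [MetricSpace M] [Group M]
  {e : M ≃ Euc d}

theorem map_one (he : IsCCChart Gd Xb e) : e 1 = Gd.one := by
  have h := congrArg (Gd.mul (Gd.inv (e 1))) (he.map_mul 1 1)
  rwa [_root_.mul_one, ← Gd.mul_assoc, Gd.inv_mul, Gd.one_mul, eq_comm] at h

theorem symm_one (he : IsCCChart Gd Xb e) : e.symm Gd.one = 1 :=
  e.symm_apply_eq.2 he.map_one.symm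

theorem map_inv (he : IsCCChart Gd Xb e) (x : M) : e x⁻¹ = Gd.inv (e x) := by
  have h := congrArg (Gd.mul (Gd.inv (e x))) (he.map_mul x x⁻¹)
  rwa [mul_inv_cancel, he.map_one, ← Gd.mul_assoc, Gd.inv_mul, Gd.mul_one, Gd.one_mul,
    eq_comm] at h

theorem symm_mul (he : IsCCChart Gd Xb e) (a b : Euc d) :
    e.symm (Gd.mul a b) = e.symm a * e.symm b :=
  e.symm_apply_eq.2 (by simp [he.map_mul])

theorem exists_admissible (he : IsCCChart Gd Xb e) {x y : M} {r : ℝ} (h : dist x y < r) :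
    ∃ b < r, ∃ γ, (Gd.ccData Xb).Admissible b γ ∧ γ 0 = e x ∧ γ b = e y := by
  obtain ⟨b, γ, hγ⟩ := he.connects (e x) (mem_univ _) (e y) (mem_univ _)
  rw [he.dist_eq] at h
  obtain ⟨b, ⟨γ, hγ⟩, hb⟩ := exists_lt_of_csInf_lt (by exact ⟨b, γ, hγ⟩) h
  exact ⟨b, hb, γ, hγ⟩

theorem dist_symm_le (he : IsCCChart Gd Xb e) {b : ℝ} {γ : ℝ → Euc d}
    (h : (Gd.ccData Xb).Admissible b γ) : dist (e.symm (γ 0)) (e.symm (γ b)) ≤ b := by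
  rw [he.dist_eq, e.apply_symm_apply, e.apply_symm_apply]
  exact csInf_le ⟨0, fun b ⟨_, h, _⟩ => h.1⟩ ⟨γ, h, rfl, rfl⟩

theorem isIsometricSMul (he : IsCCChart Gd Xb e) : IsIsometricSMul M M := by
  have hle (a x y : M) : dist (a * x) (a * y) ≤ dist x y := by
    refine le_of_forall_gt fun r hr => ?_
    obtain ⟨b, hb, γ, hγ, h0, hb'⟩ := he.exists_admissible hr
    have h := he.dist_symm_le (LieGroupData.admissible_mul_left hγ (e a))
    rw [h0, hb', ← he.map_mul, ← he.map_mul, e.symm_apply_apply, e.symm_apply_apply] at h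
    exact h.trans_lt hb
  refine ⟨fun a => Isometry.of_dist_eq fun x y => (hle a x y).antisymm ?_⟩
  simpa using hle a⁻¹ (a * x) (a * y)

theorem exists_between (he : IsCCChart Gd Xb e) (x y : M) (p q : ℝ) (hp : 0 < p) (hq : 0 < q)
    (h : dist x y < p + q) : ∃ z, dist x z < p ∧ dist z y < q := by
  obtain ⟨b, hb, γ, hγ, h0, hb'⟩ := he.exists_admissible h
  have hle : p / (p + q) ≤ 1 := div_le_one_of_le₀ (by linarith) (by linarith)
  have hpb : b * (p / (p + q)) ≤ b := mul_le_of_le_one_right hγ.1 hle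
  have hp0 : 0 ≤ b * (p / (p + q)) := mul_nonneg hγ.1 (by positivity)
  have h1 := he.dist_symm_le (hγ.subinterval le_rfl hp0 hpb)
  have h2 := he.dist_symm_le (hγ.subinterval hp0 hpb le_rfl)
  simp only [sub_zero, zero_add, add_zero, sub_add_cancel, h0, hb', e.symm_apply_apply] at h1 h2
  refine ⟨_, h1.trans_lt ?_, h2.trans_lt ?_⟩
  · rw [← mul_div_assoc, div_lt_iff₀ (by positivity), mul_comm p]
    gcongr
  · rw [show b - b * (p / (p + q)) = b * q / (p + q) by field_simp; ring,
      div_lt_iff₀ (by positivity), mul_comm q]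
    gcongr

theorem lipschitzWith (he : IsCCChart Gd Xb e) {f : Euc d → ℝ} (hf : ContDiff ℝ 1 f) {C : NNReal}
    (hC : ∀ x, ‖(Gd.ccData Xb).hgrad f x‖ ≤ C) : LipschitzWith C fun x => f (e x) := by
  refine LipschitzWith.of_dist_le_mul fun x y => le_of_forall_pos_lt_add fun ε hε => ?_
  obtain ⟨b, hb, γ, hγ, h0, hb'⟩ := he.exists_admissible
    (lt_add_of_pos_right (dist x y) (div_pos hε (by positivity : (0 : ℝ) < C + 1)))
  have h := hγ.abs_sub_le hf hC
  rw [h0, hb', abs_sub_comm] at h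
  calc dist (f (e x)) (f (e y)) ≤ C * b := h
    _ ≤ C * (dist x y + ε / (C + 1)) := by gcongr
    _ = C * dist x y + ε * (C / (C + 1)) := by ring
    _ < C * dist x y + ε := by
      gcongr
      exact mul_lt_of_lt_one_right hε ((div_lt_one (by positivity)).2 (by simp))

theorem continuous (he : IsCCChart Gd Xb e) : Continuous e := by
  refine continuous_iff_continuousAt.2 fun x => nhds_basis_ball.tendsto_right_iff.2 fun r hr => ?_
  let φ : ContDiffBump (e x) := ⟨r / 2, r, by positivity, by linarith⟩
  obtain ⟨C, hC⟩ := LieGroupData.exists_norm_hgrad_le (Gd := Gd) (Xb := Xb)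
    (φ.contDiff (n := (⊤ : ℕ∞))) (φ.hasCompactSupport.fderiv ℝ)
  have hφ := (he.lipschitzWith (φ.contDiff) fun y =>
    (hC y).trans (Real.le_coe_toNNReal C)).continuous
  have hpos : 0 < φ (e x) := φ.pos_of_mem_ball (mem_ball_self φ.rOut_pos)
  filter_upwards [hφ.continuousAt.eventually_const_lt hpos] with y hy
  by_contra hmem
  exact hy.ne' (φ.zero_of_le_dist (by simpa using hmem))

theorem exists_horizontal_curve (he : IsCCChart Gd Xb e) {c : Fin s → ℝ} (hc : ∑ j, c j ^ 2 ≤ 1) :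
    ∃ k : ℝ → M, k 0 = 1 ∧ HasStrictDerivAt (fun t => e (k t)) (∑ j, c j • Xb j) 0 ∧
      ∀ᶠ t in 𝓝 0, dist 1 (k t) ≤ |t| := by
  obtain ⟨k, τ, hτ, hk0, hk⟩ := Gd.exists_integralCurve (∑ j, c j • Xb j)
  have hdist : ∀ p ∈ Ioo (-τ) τ, ∀ q ∈ Ioo (-τ) τ, p ≤ q →
      dist (e.symm (k p)) (e.symm (k q)) ≤ q - p := by
    intro p hp q hq hpq
    have hadm : (Gd.ccData Xb).Admissible (q - p) fun t => k (p + t) :=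
      LieGroupData.admissible_of_hasDerivAt hc (sub_nonneg.2 hpq) fun t ht =>
        (hk (p + t) ⟨by linarith [hp.1, ht.1], by linarith [hq.2, ht.2]⟩).comp_const_add p t
    simpa using he.dist_symm_le hadm
  have h0 : (0 : ℝ) ∈ Ioo (-τ) τ := ⟨neg_neg_of_pos hτ, hτ⟩
  have hsymm : e.symm (k 0) = 1 := by rw [hk0, he.symm_one]
  refine ⟨fun t => e.symm (k t), hsymm,
    by simpa using Gd.hasStrictDerivAt_integralCurve hτ hk0 hk, ?_⟩
  filter_upwards [Ioo_mem_nhds h0.1 h0.2] with t ht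
  rcases le_total 0 t with h | h
  · simpa [hsymm, abs_of_nonneg h] using hdist 0 h0 t ht h
  · simpa [hsymm, abs_of_nonpos h, dist_comm] using hdist t ht 0 h0 h

theorem exists_horizontal_curve_single (he : IsCCChart Gd Xb e) (j : Fin s) :
    ∃ k : ℝ → M, k 0 = 1 ∧ HasStrictDerivAt (fun t => e (k t)) (Xb j) 0 ∧
      ∀ᶠ t in 𝓝 0, dist 1 (k t) ≤ |t| := by
  simpa [Pi.single_apply] using he.exists_horizontal_curve (c := Pi.single j 1)
    (by simp [Pi.single_apply])

/-- A subspace containing the vectors `Ad x (X_j)` with `x` small is stable under all `[X_i, ·]`: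
differentiate `Ad (k t) (Ad x X_j)` along a horizontal curve `k`. -/
theorem span_Ad_eq_top (he : IsCCChart Gd Xb e) (hgen : Gd.IsBracketGenerating Xb) {ε : ℝ}
    (hε : 0 < ε) :
    Submodule.span ℝ {v | ∃ x j, dist 1 x < ε ∧ Gd.Ad (e x) (Xb j) = v} = ⊤ := by
  have := he.isIsometricSMul
  set L := Submodule.span ℝ {v | ∃ x j, dist 1 x < ε ∧ Gd.Ad (e x) (Xb j) = v}
  refine hgen L (fun j => Submodule.subset_span ⟨1, j, by simpa, ?_⟩) fun i => ?_
  · rw [he.map_one, Gd.Ad_one]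
  intro z hz
  obtain ⟨k, hk0, hkd, hk⟩ := he.exists_horizontal_curve_single i
  have hmem : ∀ᶠ t in 𝓝 0, Gd.Ad (e (k t)) z ∈ L := by
    induction hz using Submodule.span_induction with
    | mem z hz =>
      obtain ⟨x, j, hx, rfl⟩ := hz
      filter_upwards [hk, ball_mem_nhds 0 (sub_pos.2 hx)] with t ht ht'
      rw [mem_ball_zero_iff, Real.norm_eq_abs] at ht'
      refine Submodule.subset_span ⟨k t * x, j, ?_, by rw [he.map_mul, Gd.Ad_mul]⟩
      exact (dist_one_mul_le _ _).trans_lt (by linarith)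
    | zero => simp
    | add u v _ _ hu hv =>
      filter_upwards [hu, hv] with t hu hv
      rw [map_add]
      exact L.add_mem hu hv
    | smul a u _ hu =>
      filter_upwards [hu] with t hu
      rw [map_smul]
      exact L.smul_mem a hu
  have hderiv : HasDerivAt (fun t => Gd.Ad (e (k t)) z) (Gd.bracket (Xb i) z) 0 := by
    rw [← Gd.fderiv_Ad, ← he.map_one, ← hk0]
    exact ((Gd.contDiff_Ad z).differentiable (by simp) _).hasFDerivAt.comp_hasDerivAt 0
      hkd.hasDerivAt
  refine L.closed_of_finiteDimensional.mem_of_tendsto hderiv.tendsto_slope ?_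
  filter_upwards [hmem.filter_mono nhdsWithin_le_nhds] with t ht
  rw [slope_def_module]
  exact L.smul_mem _ (L.sub_mem ht hmem.self_of_nhds)

theorem hasStrictFDerivAt_list_prod (he : IsCCChart Gd Xb e) {κ W : Type*} [NormedAddCommGroup W]
    [NormedSpace ℝ W] {g : κ → W → M} {A : κ → W →L[ℝ] Euc d} (hg0 : ∀ i, g i 0 = 1)
    (hg : ∀ i, HasStrictFDerivAt (fun w => e (g i w)) (A i) 0) (l : List κ) :
    HasStrictFDerivAt (fun w => e (l.map fun i => g i w).prod) (l.map A).sum 0 := by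
  induction l with
  | nil => simpa using hasStrictFDerivAt_const _ _
  | cons i l ih =>
    simp only [List.map_cons, List.prod_cons, he.map_mul, List.sum_cons]
    exact Gd.hasStrictFDerivAt_mul (hg i) ih (by rw [hg0, he.map_one]) (by simp [hg0, he.map_one])

theorem exists_conj_curve (he : IsCCChart Gd Xb e) {ε : ℝ} (hε : 0 < ε) {x : M}
    (hx : dist 1 x < ε) (j : Fin s) :
    ∃ k : ℝ → M, k 0 = 1 ∧ HasStrictDerivAt (fun t => e (k t)) (Gd.Ad (e x) (Xb j)) 0 ∧
      ∀ᶠ t in 𝓝 0, dist 1 (k t) ≤ 3 * ε := by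
  have := he.isIsometricSMul
  obtain ⟨k, hk0, hkd, hk⟩ := he.exists_horizontal_curve_single j
  refine ⟨fun t => x * k t * x⁻¹, by simp [hk0], ?_, ?_⟩
  · have hconj := Gd.hasStrictFDerivAt_conj (e x)
    rw [← he.map_one, ← hk0] at hconj
    simp only [he.map_mul, he.map_inv]
    exact hconj.comp_hasStrictDerivAt 0 hkd
  · filter_upwards [hk, ball_mem_nhds 0 hε] with t ht ht'
    rw [mem_ball_zero_iff, Real.norm_eq_abs] at ht'
    have h1 := dist_one_mul_le (x * k t) x⁻¹
    have h2 := dist_one_mul_le x (k t)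
    rw [dist_one_inv] at h1
    linarith

/-- Products of conjugated horizontal curves in linearly independent directions are submersive, so
their short products fill a neighbourhood of the identity. -/
theorem eventually_dist_symm_le (he : IsCCChart Gd Xb e) (hgen : Gd.IsBracketGenerating Xb)
    {ε : ℝ} (hε : 0 < ε) : ∀ᶠ y in 𝓝 Gd.one, dist 1 (e.symm y) ≤ d * (3 * ε) := by
  have := he.isIsometricSMul
  obtain ⟨κ, b, hb⟩ : ∃ (κ : Type) (b : Module.Basis κ ℝ (Euc d)),
      range b ⊆ {v | ∃ x j, dist 1 x < ε ∧ Gd.Ad (e x) (Xb j) = v} :=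
    ⟨_, _, Module.Basis.ofSpan_subset (he.span_Ad_eq_top hgen hε).ge⟩
  have : Fintype κ := FiniteDimensional.fintypeBasisIndex b
  choose x j hx hbx using fun i => hb (mem_range_self i)
  choose k hk0 hkd hk using fun i => he.exists_conj_curve hε (hx i) (j i)
  simp only [hbx] at hkd
  let π (i : κ) : (κ → ℝ) →L[ℝ] ℝ := ContinuousLinearMap.proj i
  let Φ : (κ → ℝ) → M := fun w => (Finset.univ.toList.map fun i => k i (w i)).prod
  have hΦ : HasStrictFDerivAt (fun w => e (Φ w)) (∑ i, (π i).smulRight (b i)) 0 := by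
    rw [← Finset.sum_map_toList]
    refine he.hasStrictFDerivAt_list_prod (g := fun i (w : κ → ℝ) => k i (w i)) hk0 (fun i => ?_) _
    refine ((hkd i).hasStrictFDerivAt.comp (f := fun w : κ → ℝ => w i) 0
      (π i).hasStrictFDerivAt).congr_fderiv ?_
    ext1 w
    simp
  have hsurj : (∑ i, (π i).smulRight (b i)).range = ⊤ := by
    refine LinearMap.range_eq_top.2 fun v => ⟨b.equivFun v, ?_⟩
    simp [π]
  have hmap := hΦ.map_nhds_eq_of_surj hsurj
  rw [show e (Φ 0) = Gd.one by simp [Φ, hk0, he.map_one]] at hmap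
  rw [← hmap, eventually_map]
  have hsmall (i : κ) : ∀ᶠ w in 𝓝 (0 : κ → ℝ), dist 1 (k i (w i)) ≤ 3 * ε :=
    ((continuous_apply i).tendsto' (0 : κ → ℝ) (0 : ℝ) rfl).eventually (hk i)
  filter_upwards [eventually_all.2 hsmall] with w hw
  calc dist 1 (e.symm (e (Φ w))) ≤ ∑ i, dist 1 (k i (w i)) := by
        simpa [List.map_map, Function.comp_def] using
          dist_one_prod_le (Finset.univ.toList.map fun i => k i (w i))
    _ ≤ ∑ _i : κ, 3 * ε := Finset.sum_le_sum fun i _ => hw i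
    _ = d * (3 * ε) := by
        simp [← Module.finrank_eq_card_basis b]

theorem continuous_symm (he : IsCCChart Gd Xb e) (hgen : Gd.IsBracketGenerating Xb) :
    Continuous e.symm := by
  have := he.isIsometricSMul
  have hone : ContinuousAt e.symm Gd.one := by
    refine nhds_basis_ball.tendsto_right_iff.2 fun r hr => ?_
    filter_upwards [he.eventually_dist_symm_le hgen (ε := r / (3 * (d + 1))) (by positivity)]
      with y hy
    rw [mem_ball', he.symm_one]
    refine hy.trans_lt ?_
    rw [show d * (3 * (r / (3 * (d + 1)))) = r * (d / (d + 1) : ℝ) by field_simp]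
    exact mul_lt_of_lt_one_right hr ((div_lt_one (by positivity)).2 (lt_add_one _))
  refine continuous_iff_continuousAt.2 fun y => ?_
  have htrans : ContinuousAt (Gd.mul (Gd.inv y)) y :=
    (Gd.contDiff_mul_left _).continuous.continuousAt
  rw [← Gd.inv_mul y] at hone
  have h := (ContinuousAt.comp (f := Gd.mul (Gd.inv y)) hone htrans).const_smul (e.symm y)
  refine h.congr (Eventually.of_forall fun z => ?_)
  change e.symm y * e.symm (Gd.mul (Gd.inv y) z) = e.symm z
  rw [← he.symm_mul, ← Gd.mul_assoc, Gd.mul_inv, Gd.one_mul]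

/-- The chart as a homeomorphism, once the horizontal frame is bracket generating. -/
def toHomeomorph (he : IsCCChart Gd Xb e) (hgen : Gd.IsBracketGenerating Xb) : M ≃ₜ Euc d where
  toEquiv := e
  continuous_toFun := he.continuous
  continuous_invFun := he.continuous_symm hgen

theorem isTopologicalGroup (he : IsCCChart Gd Xb e) (hgen : Gd.IsBracketGenerating Xb) :
    IsTopologicalGroup M where
  continuous_mul := by
    have h (p : M × M) : p.1 * p.2 = e.symm (Gd.mul (e p.1) (e p.2)) := by simp [he.symm_mul]
    simp only [h]
    exact (he.continuous_symm hgen).comp (Gd.smooth_mul.continuous.comp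
      (he.continuous.prodMap he.continuous))
  continuous_inv := by
    have h (x : M) : x⁻¹ = e.symm (Gd.inv (e x)) := by simp [← he.map_inv]
    simp only [h]
    exact (he.continuous_symm hgen).comp (Gd.smooth_inv.continuous.comp he.continuous)

theorem properSpace (he : IsCCChart Gd Xb e) (hgen : Gd.IsBracketGenerating Xb) :
    ProperSpace M := by
  have := he.isIsometricSMul
  have := he.isTopologicalGroup hgen
  have : WeaklyLocallyCompactSpace M :=
    (he.toHomeomorph hgen).isClosedEmbedding.weaklyLocallyCompactSpace
  exact properSpace_of_exists_between he.exists_between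

theorem norm_hgrad_le (he : IsCCChart Gd Xb e) {f : Euc d → ℝ} (hf : Differentiable ℝ f)
    {C : NNReal} (hC : LipschitzWith C fun x => f (e x)) (x : Euc d) :
    ‖(Gd.ccData Xb).hgrad f x‖ ≤ C := by
  have := he.isIsometricSMul
  set v := (Gd.ccData Xb).hgrad f x with hv
  rcases eq_or_ne v 0 with hv0 | hv0
  · simp [hv0]
  have hnorm : ∑ j, (‖v‖⁻¹ * v j) ^ 2 = 1 := by
    simp only [mul_pow, ← Finset.mul_sum, ← EuclideanSpace.real_norm_sq_eq]
    field_simp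
  obtain ⟨k, hk0, hkd, hk⟩ := he.exists_horizontal_curve hnorm.le
  have hcurve : HasDerivAt (fun t => Gd.mul x (e (k t)))
      (∑ j, (‖v‖⁻¹ * v j) • (Gd.ccData Xb).X j x) 0 := by
    simp only [LieGroupData.ccData, ← Gd.lvf_sum_smul]
    have hmul := ((Gd.contDiff_mul_left x).differentiable (by simp) (e (k 0))).hasFDerivAt
    have h := hmul.comp_hasDerivAt 0 hkd.hasDerivAt
    rw [hk0, he.map_one] at h
    exact h
  have hfcurve : HasDerivAt (fun t => f (Gd.mul x (e (k t)))) ‖v‖ 0 := by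
    have h := (hf (Gd.mul x (e (k 0)))).hasFDerivAt.comp_hasDerivAt 0 hcurve
    rw [hk0, he.map_one, Gd.mul_one, CCData.fderiv_sum_smul_X, ← hv] at h
    have hinner : inner ℝ v (WithLp.toLp 2 fun j => ‖v‖⁻¹ * v j) = ‖v‖ := by
      change inner ℝ v (‖v‖⁻¹ • v) = ‖v‖
      rw [real_inner_smul_right, real_inner_self_eq_norm_mul_norm]
      field_simp
    rwa [hinner] at h
  rw [← norm_norm v]
  refine hfcurve.le_of_lip' C.2 ?_
  filter_upwards [hk] with t ht
  have h := hC.dist_le_mul (e.symm x * k t) (e.symm x * k 0)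
  simp only [he.map_mul, e.apply_symm_apply, dist_mul_left, hk0, dist_comm _ (1 : M)] at h
  rw [hk0, ← dist_eq_norm, sub_zero]
  exact h.trans (mul_le_mul_of_nonneg_left ht C.2)

end IsCCChart

/-! ### Smoothing Lipschitz functions -/

theorem abs_integral_mul_sub_integral_mul_le {α : Type*} [MeasurableSpace α]
    {μ : MeasureTheory.Measure α} {χ a b : α → ℝ} (hχ0 : ∀ y, 0 ≤ χ y) (hχ1 : ∫ y, χ y ∂μ = 1)
    (ha : MeasureTheory.Integrable (fun y => χ y * a y) μ)
    (hb : MeasureTheory.Integrable (fun y => χ y * b y) μ) {r : ℝ}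
    (hr : ∀ y, χ y ≠ 0 → |a y - b y| ≤ r) :
    |∫ y, χ y * a y ∂μ - ∫ y, χ y * b y ∂μ| ≤ r := by
  have hχ : MeasureTheory.Integrable χ μ := MeasureTheory.integrable_of_integral_eq_one hχ1
  rw [← MeasureTheory.integral_sub ha hb, ← one_mul r, ← hχ1, ← MeasureTheory.integral_mul_const,
    ← Real.norm_eq_abs]
  refine MeasureTheory.norm_integral_le_of_norm_le (hχ.mul_const r)
    (Eventually.of_forall fun y => ?_)
  rw [← mul_sub, Real.norm_eq_abs, abs_mul, abs_of_nonneg (hχ0 y)]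
  rcases eq_or_ne (χ y) 0 with h | h
  · simp [h]
  · exact mul_le_mul_of_nonneg_left (hr y h) (hχ0 y)

theorem exists_hasCompactSupport_eqOn_closedBall {M : Type*} [PseudoMetricSpace M] [ProperSpace M]
    {o : M} {f : M → ℝ} (hf : LipschitzWith 1 f) (hfo : f o = 0) (R : ℝ) :
    ∃ g, LipschitzWith 1 g ∧ HasCompactSupport g ∧ EqOn g f (closedBall o R) := by
  let u (x : M) : ℝ := max 0 (2 * R - dist x o)
  have hu : LipschitzWith 1 u := by
    simpa using (LipschitzWith.const (0 : ℝ)).max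
      ((LipschitzWith.const (2 * R)).sub (LipschitzWith.dist_left o))
  refine ⟨fun x => max (min (f x) (u x)) (-u x), by simpa using (hf.min hu).max hu.neg, ?_, ?_⟩
  · refine HasCompactSupport.intro (isCompact_closedBall o (2 * R)) fun x hx => ?_
    have hux : u x = 0 := max_eq_left (by linarith [not_le.1 (mt mem_closedBall.2 hx)])
    simp [hux]
  · intro x hx
    have hux : dist x o ≤ u x := le_max_of_le_right (by linarith [mem_closedBall.1 hx])
    have hfx := hf.dist_le_mul x o
    rw [hfo, dist_zero_right, Real.norm_eq_abs, NNReal.coe_one, one_mul, abs_le] at hfx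
    simp only
    rw [min_eq_left (by linarith), max_eq_left (by linarith)]

section LeftAverage

variable {M : Type*} [Group M] [MetricSpace M] [IsTopologicalGroup M] [MeasurableSpace M]
  {μ : MeasureTheory.Measure M} {χ f : M → ℝ}

/-- The average of the left translates `x ↦ f (y⁻¹ * x)` with weights `χ y`, that is, the
convolution of `χ` and `f` on a group; averaging on the left preserves the Lipschitz constant of `f`
for a left-invariant metric. -/
def leftAverage (μ : MeasureTheory.Measure M) (χ f : M → ℝ) (x : M) : ℝ :=
  ∫ y, χ y * f (y⁻¹ * x) ∂μ

theorem hasCompactSupport_leftAverage (hχ : HasCompactSupport χ) (hf : HasCompactSupport f) :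
    HasCompactSupport (leftAverage μ χ f) := by
  refine HasCompactSupport.intro (IsCompact.mul hχ hf) fun x hx => ?_
  have hzero (y : M) : χ y * f (y⁻¹ * x) = 0 := by
    by_contra hne
    exact hx ⟨y, subset_closure (left_ne_zero_of_mul hne), _,
      subset_closure (right_ne_zero_of_mul hne), mul_inv_cancel_left y x⟩
  simp [leftAverage, hzero]

variable [BorelSpace M]

theorem leftAverage_eq [μ.IsMulLeftInvariant] (x : M) :
    leftAverage μ χ f x = ∫ z, χ (x * z) * f z⁻¹ ∂μ := by
  rw [leftAverage, ← MeasureTheory.integral_mul_left_eq_self _ x]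
  simp [mul_inv_rev]

variable [MeasureTheory.IsFiniteMeasureOnCompacts μ]

theorem integrable_mul_comp_inv_mul (hχc : Continuous χ) (hχ : HasCompactSupport χ)
    (hf : Continuous f) (x : M) :
    MeasureTheory.Integrable (fun y => χ y * f (y⁻¹ * x)) μ :=
  Continuous.integrable_of_hasCompactSupport (by fun_prop) hχ.mul_right

theorem lipschitzWith_leftAverage [IsIsometricSMul M M] (hχc : Continuous χ)
    (hχ : HasCompactSupport χ) (hχ0 : ∀ y, 0 ≤ χ y) (hχ1 : ∫ y, χ y ∂μ = 1) {K : NNReal}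
    (hf : LipschitzWith K f) : LipschitzWith K (leftAverage μ χ f) :=
  LipschitzWith.of_dist_le_mul fun x x' => abs_integral_mul_sub_integral_mul_le hχ0 hχ1
    (integrable_mul_comp_inv_mul hχc hχ hf.continuous x)
    (integrable_mul_comp_inv_mul hχc hχ hf.continuous x') fun y _ => by
      simpa only [dist_mul_left, Real.dist_eq] using hf.dist_le_mul (y⁻¹ * x) (y⁻¹ * x')

theorem abs_leftAverage_sub_le (hχc : Continuous χ) (hχ : HasCompactSupport χ)
    (hχ0 : ∀ y, 0 ≤ χ y) (hχ1 : ∫ y, χ y ∂μ = 1) (hf : Continuous f) {x : M} {r : ℝ}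
    (hr : ∀ y, χ y ≠ 0 → |f (y⁻¹ * x) - f x| ≤ r) : |leftAverage μ χ f x - f x| ≤ r := by
  have hfx : ∫ y, χ y * f x ∂μ = f x := by
    rw [MeasureTheory.integral_mul_const, hχ1, one_mul]
  rw [leftAverage, ← hfx]
  refine abs_integral_mul_sub_integral_mul_le hχ0 hχ1 (integrable_mul_comp_inv_mul hχc hχ hf x)
    ((hχc.integrable_of_hasCompactSupport hχ).mul_const _) fun y hy => ?_
  simpa only [hfx] using hr y hy

end LeftAverage

/-- Apply the smoothness of convolutions depending on a parameter at the point `0`, the convolution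
with parameter `p` being that of `g` and `t ↦ χ (p · (-t))`. -/
theorem LieGroupData.contDiff_integral_mul {d : ℕ} (Gd : LieGroupData d)
    (ν : MeasureTheory.Measure (Euc d)) [MeasureTheory.IsLocallyFiniteMeasure ν] {g χ : Euc d → ℝ}
    (hg : Continuous g) (hχ : ContDiff ℝ (⊤ : ℕ∞) χ) (hs : HasCompactSupport χ) :
    ContDiff ℝ (⊤ : ℕ∞) fun x => ∫ z, g z * χ (Gd.mul x z) ∂ν := by
  refine contDiff_iff_contDiffAt.2 fun x₀ => ?_
  have hk : IsCompact ((fun p : Euc d × Euc d => -Gd.mul (Gd.inv p.1) p.2) ''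
      closedBall x₀ 1 ×ˢ tsupport χ) :=
    ((isCompact_closedBall x₀ 1).prod hs).image (Gd.smooth_mul.continuous.comp
      (Gd.smooth_inv.continuous.prodMap continuous_id)).neg
  have hconv := MeasureTheory.contDiffOn_convolution_right_with_param (μ := ν) (f := g) (n := ⊤)
    (ContinuousLinearMap.mul ℝ ℝ) (g := fun p t => χ (Gd.mul p (-t))) (s := ball x₀ 1)
    isOpen_ball hk ?_ hg.locallyIntegrable ?_
  · have hat := ContDiffAt.comp (f := fun x : Euc d => (x, (0 : Euc d))) x₀
      (hconv.contDiffAt ((isOpen_ball.prod isOpen_univ).mem_nhds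
        ⟨mem_ball_self one_pos, mem_univ _⟩)) (contDiff_id.prodMk contDiff_const).contDiffAt
    simpa only [MeasureTheory.convolution_def, Function.comp_def, ContinuousLinearMap.mul_apply',
      zero_sub, neg_neg] using hat
  · intro p t hp ht
    by_contra hne
    refine ht ⟨(p, Gd.mul p (-t)), ⟨ball_subset_closedBall hp, subset_closure hne⟩, ?_⟩
    simp [← Gd.mul_assoc, Gd.inv_mul, Gd.one_mul]
  · exact (hχ.comp (Gd.smooth_mul.comp (contDiff_fst.prodMk contDiff_snd.neg))).contDiffOn

namespace IsCCChart

variable {d s : ℕ} {Gd : LieGroupData d} {Xb : Fin s → Euc d} {M : Type*} [MetricSpace M] [Group M]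
  {e : M ≃ Euc d}

theorem contDiff_leftAverage (he : IsCCChart Gd Xb e) (hgen : Gd.IsBracketGenerating Xb)
    [MeasurableSpace M] [BorelSpace M] {μ : MeasureTheory.Measure M} [μ.IsMulLeftInvariant]
    [MeasureTheory.IsFiniteMeasureOnCompacts μ] {χ : Euc d → ℝ} (hχ : ContDiff ℝ (⊤ : ℕ∞) χ)
    (hs : HasCompactSupport χ) {f : M → ℝ} (hf : Continuous f) :
    ContDiff ℝ (⊤ : ℕ∞) fun x => leftAverage μ (fun y => χ (e y)) f (e.symm x) := by
  have := he.isTopologicalGroup hgen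
  let E := he.toHomeomorph hgen
  have : MeasureTheory.IsFiniteMeasureOnCompacts (μ.map E) :=
    MeasureTheory.Measure.IsFiniteMeasureOnCompacts.map μ E
  have hmap (g : Euc d → ℝ) : ∫ z, g z ∂μ.map E = ∫ y, g (e y) ∂μ :=
    E.toMeasurableEquiv.measurableEmbedding.integral_map g
  have hg : Continuous fun z => f (E.symm z)⁻¹ := hf.comp E.symm.continuous.inv
  convert Gd.contDiff_integral_mul (μ.map E) hg hχ hs using 2 with x
  rw [hmap, leftAverage_eq]
  refine MeasureTheory.integral_congr_ae (Eventually.of_forall fun y => ?_)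
  change χ (e (e.symm x * y)) * f y⁻¹ = f (e.symm (e y))⁻¹ * χ (Gd.mul x (e y))
  rw [he.map_mul, e.apply_symm_apply, e.symm_apply_apply, mul_comm]

theorem exists_smooth_approx_of_hasCompactSupport (he : IsCCChart Gd Xb e)
    (hgen : Gd.IsBracketGenerating Xb) {f : M → ℝ} (hf : LipschitzWith 1 f)
    (hs : HasCompactSupport f) (A : Finset M) {ε : ℝ} (hε : 0 < ε) :
    ∃ g : Euc d → ℝ, ContDiff ℝ (⊤ : ℕ∞) g ∧ HasCompactSupport g ∧
      LipschitzWith 1 (fun x => g (e x)) ∧ ∀ x ∈ A, |g (e x) - f x| ≤ ε := by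
  have := he.isIsometricSMul
  have := he.isTopologicalGroup hgen
  have := he.properSpace hgen
  borelize M
  let E := he.toHomeomorph hgen
  let μ : MeasureTheory.Measure M := MeasureTheory.Measure.haar
  have : MeasureTheory.IsFiniteMeasureOnCompacts (μ.map E) :=
    MeasureTheory.Measure.IsFiniteMeasureOnCompacts.map μ E
  have : (μ.map E).IsOpenPosMeasure := E.continuous.isOpenPosMeasure_map E.surjective
  have hnear : ∀ᶠ y in 𝓝 (1 : M), ∀ x ∈ A, dist (f (y⁻¹ * x)) (f x) < ε := by
    refine (eventually_all_finset A).2 fun x _ => ?_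
    have hcont : Continuous fun y : M => f (y⁻¹ * x) := hf.continuous.comp (by fun_prop)
    simpa using (hcont.tendsto 1).eventually (ball_mem_nhds _ hε)
  obtain ⟨ρ, hρ, hball⟩ := Metric.eventually_nhds_iff_ball.1
    ((E.symm.continuous.tendsto' Gd.one 1 he.symm_one).eventually hnear)
  let φ : ContDiffBump Gd.one := ⟨ρ / 2, ρ, by positivity, by linarith⟩
  let χ : Euc d → ℝ := φ.normed (μ.map E)
  have hχs : HasCompactSupport χ := φ.hasCompactSupport_normed
  have hχ0 (y : M) : 0 ≤ χ (e y) := φ.nonneg_normed _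
  have hχ1 : ∫ y, χ (e y) ∂μ = 1 := by
    rw [← φ.integral_normed (μ := μ.map E)]
    exact (E.toMeasurableEquiv.measurableEmbedding.integral_map χ).symm
  have hχc : Continuous fun y => χ (e y) := φ.continuous_normed.comp he.continuous
  have hχM : HasCompactSupport fun y => χ (e y) := hχs.comp_homeomorph E
  refine ⟨fun x => leftAverage μ (fun y => χ (e y)) f (e.symm x),
    he.contDiff_leftAverage hgen φ.contDiff_normed hχs hf.continuous,
    (hasCompactSupport_leftAverage hχM hs).comp_homeomorph E.symm, ?_, fun x hx => ?_⟩
  · simpa only [e.symm_apply_apply] using lipschitzWith_leftAverage hχc hχM hχ0 hχ1 hf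
  · simp only [e.symm_apply_apply]
    refine abs_leftAverage_sub_le hχc hχM hχ0 hχ1 hf.continuous fun y hy => ?_
    have hmem : e y ∈ ball Gd.one ρ := φ.support_normed_eq (μ := μ.map E) ▸ hy
    have h := (hball (e y) hmem x hx).le
    rwa [show E.symm (e y) = y from e.symm_apply_apply y] at h

theorem exists_smooth_approx (he : IsCCChart Gd Xb e) (hgen : Gd.IsBracketGenerating Xb)
    {f : M → ℝ} (hf : LipschitzWith 1 f) (A : Finset M) {ε : ℝ} (hε : 0 < ε) :
    ∃ g : Euc d → ℝ, ContDiff ℝ (⊤ : ℕ∞) g ∧ HasCompactSupport (fderiv ℝ g) ∧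
      (∀ x, ‖(Gd.ccData Xb).hgrad g x‖ ≤ 1) ∧ ∀ x ∈ A, |g (e x) - f x| ≤ ε := by
  have := he.properSpace hgen
  obtain ⟨R, hR⟩ := A.finite_toSet.isBounded.subset_closedBall 1
  obtain ⟨f', hf', hs, heq⟩ := exists_hasCompactSupport_eqOn_closedBall (o := (1 : M))
    (by simpa using hf.sub (LipschitzWith.const (f 1))) (sub_self (f 1)) R
  obtain ⟨g, hg, hgs, hgL, hgA⟩ := he.exists_smooth_approx_of_hasCompactSupport hgen hf' hs A hε
  have hfderiv : fderiv ℝ (fun x => g x + f 1) = fderiv ℝ g := funext fun x => fderiv_add_const _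
  refine ⟨fun x => g x + f 1, hg.add contDiff_const, hfderiv ▸ hgs.fderiv ℝ, fun x => ?_,
    fun x hx => ?_⟩
  · simp only [CCData.hgrad, hfderiv]
    exact he.norm_hgrad_le (hg.differentiable (by simp)) hgL x
  · have := hgA x hx
    rwa [heq (hR hx), ← sub_add, sub_add_eq_add_sub] at this

end IsCCChart

/-! ### The gradient structure of a Carnot–Carathéodory group -/

section SmoothFunctions

variable {E : Type*} [NormedAddCommGroup E] [NormedSpace ℝ E]

/-- The space of smooth functions with compactly supported derivative. -/
def smoothFunctions (E : Type*) [NormedAddCommGroup E] [NormedSpace ℝ E] :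
    Submodule ℝ (E → ℝ) where
  carrier := {f | ContDiff ℝ (⊤ : ℕ∞) f ∧ HasCompactSupport (fderiv ℝ f)}
  zero_mem' := ⟨contDiff_const, HasCompactSupport.zero.fderiv ℝ⟩
  add_mem' hf hg := by
    refine ⟨hf.1.add hg.1, ?_⟩
    have hd {f : E → ℝ} (hf : ContDiff ℝ (⊤ : ℕ∞) f) : Differentiable ℝ f :=
      hf.differentiable (by simp)
    rw [show fderiv ℝ (_ + _) = _ from funext fun x => fderiv_add (hd hf.1 x) (hd hg.1 x)]
    exact hf.2.add hg.2
  smul_mem' a f hf := by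
    refine ⟨hf.1.const_smul a, ?_⟩
    rw [fderiv_const_smul_field]
    exact hf.2.mono (Function.support_const_smul_subset a _)

/-- The space of smooth compactly supported functions. -/
def bumpFunctions (E : Type*) [NormedAddCommGroup E] [NormedSpace ℝ E] :
    Submodule ℝ (E → ℝ) where
  carrier := {f | ContDiff ℝ (⊤ : ℕ∞) f ∧ HasCompactSupport f}
  zero_mem' := ⟨contDiff_const, HasCompactSupport.zero⟩
  add_mem' hf hg := ⟨hf.1.add hg.1, hf.2.add hg.2⟩
  smul_mem' a _ hf := ⟨hf.1.const_smul a, hf.2.mono (Function.support_const_smul_subset a _)⟩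

theorem differentiable_of_mem_smoothFunctions {f : E → ℝ} (hf : f ∈ smoothFunctions E) :
    Differentiable ℝ f :=
  hf.1.differentiable (by simp)

theorem const_mem_smoothFunctions (a : ℝ) : (fun _ => a) ∈ smoothFunctions E :=
  ⟨contDiff_const, by simpa using HasCompactSupport.zero⟩

theorem bumpFunctions_le_smoothFunctions : bumpFunctions E ≤ smoothFunctions E :=
  fun _ hf => ⟨hf.1, hf.2.fderiv ℝ⟩

theorem mul_mem_bumpFunctions {h f : E → ℝ} (hh : h ∈ bumpFunctions E)
    (hf : f ∈ smoothFunctions E) : h * f ∈ bumpFunctions E :=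
  ⟨hh.1.mul hf.1, hh.2.mul_right⟩

theorem exists_mem_bumpFunctions_norm_le {V : Type*} [NormedAddCommGroup V]
    [InnerProductSpace ℝ V] {u : E → V} (hu : ContDiff ℝ (⊤ : ℕ∞) u) (hsupp : HasCompactSupport u)
    {η : ℝ} (hη : 0 < η) :
    ∃ h ∈ bumpFunctions E, ∀ x, 0 ≤ h x ∧ h x ≤ ‖u x‖ ∧ ‖u x‖ ≤ h x + η := by
  refine ⟨fun x => √(η ^ 2 + ‖u x‖ ^ 2) - η, ⟨?_, ?_⟩, fun x => ⟨?_, ?_, ?_⟩⟩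
  · exact ((contDiff_const.add (hu.norm_sq ℝ)).sqrt fun x => by positivity).sub contDiff_const
  · exact hsupp.mono fun x hx h0 => hx (by simp [h0, Real.sqrt_sq hη.le])
  · exact sub_nonneg.2 (Real.le_sqrt_of_sq_le (le_add_of_nonneg_right (sq_nonneg _)))
  · refine sub_le_iff_le_add.2 (Real.sqrt_le_iff.2 ⟨by positivity, ?_⟩)
    nlinarith [norm_nonneg (u x)]
  · rw [sub_add_cancel]
    exact Real.le_sqrt_of_sq_le (le_add_of_nonneg_left (sq_nonneg _))

end SmoothFunctions

namespace IsCCChart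

variable {d s : ℕ} {Gd : LieGroupData d} {Xb : Fin s → Euc d} {M : Type*} [MetricSpace M] [Group M]
  {e : M ≃ Euc d}

theorem totallyBounded_ne_zero (he : IsCCChart Gd Xb e) (hgen : Gd.IsBracketGenerating Xb)
    {h : Euc d → ℝ} (hh : HasCompactSupport h) :
    TotallyBounded {x | h (e x) ≠ 0 ∨ (Gd.ccData Xb).hgrad h (e x) ≠ 0} := by
  have hgrad := (Gd.ccData Xb).hasCompactSupport_hgrad (hh.fderiv ℝ)
  exact ((he.toHomeomorph hgen).isCompact_preimage.2 (hh.union hgrad)).totallyBounded.subset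
    fun _ hx => hx.imp (fun h => subset_tsupport _ h) fun h => subset_tsupport _ h

/-- The horizontal first-order calculus on `M`: smoothness is read off in the chart, and the
gradient is the horizontal one. -/
def gradientStructure (he : IsCCChart Gd Xb e) (hgen : Gd.IsBracketGenerating Xb) :
    GradientStructure M (EuclideanSpace ℝ (Fin s)) where
  smooth := (smoothFunctions (Euc d)).comap (LinearMap.funLeft ℝ ℝ e.symm)
  bump := (bumpFunctions (Euc d)).comap (LinearMap.funLeft ℝ ℝ e.symm)
  grad f x := (Gd.ccData Xb).hgrad (f ∘ e.symm) (e x)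
  const_mem := const_mem_smoothFunctions
  grad_const a := funext fun x => congrFun ((Gd.ccData Xb).hgrad_const a) (e x)
  grad_add hf hg := funext fun x => congrFun ((Gd.ccData Xb).hgrad_add
    (differentiable_of_mem_smoothFunctions hf) (differentiable_of_mem_smoothFunctions hg)) (e x)
  grad_smul a f _ := funext fun x => congrFun ((Gd.ccData Xb).hgrad_smul a (f ∘ e.symm)) (e x)
  exists_norm_grad_le hf := by
    obtain ⟨C, hC⟩ := LieGroupData.exists_norm_hgrad_le (Gd := Gd) (Xb := Xb) hf.1 hf.2
    exact ⟨C.toNNReal, fun x => (hC (e x)).trans (Real.le_coe_toNNReal C)⟩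
  lipschitzWith {f} C hf hC := by
    have hC' (x : Euc d) : ‖(Gd.ccData Xb).hgrad (f ∘ e.symm) x‖ ≤ C := by
      simpa using hC (e.symm x)
    simpa using he.lipschitzWith (hf.1.of_le (by exact_mod_cast le_top)) hC'
  bump_le_smooth := Submodule.comap_mono bumpFunctions_le_smoothFunctions
  mul_mem hh hu := bumpFunctions_le_smoothFunctions (mul_mem_bumpFunctions hh hu)
  grad_mul hh hu x := by
    have := (Gd.ccData Xb).hgrad_mul
      (differentiable_of_mem_smoothFunctions (bumpFunctions_le_smoothFunctions hh))
      (differentiable_of_mem_smoothFunctions hu) (e x)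
    simpa [LinearMap.funLeft, Pi.mul_comp] using this
  totallyBounded hh := by simpa [LinearMap.funLeft] using he.totallyBounded_ne_zero hgen hh.2
  exists_approx hf A ε hε := by
    obtain ⟨g, hg, hsupp, hnorm, hgf⟩ := he.exists_smooth_approx hgen hf A hε
    have hcomp : (g ∘ e) ∘ e.symm = g := by ext; simp
    refine ⟨g ∘ e, ?_, fun x => ?_, hgf⟩
    · change (g ∘ e) ∘ e.symm ∈ smoothFunctions (Euc d)
      rw [hcomp]
      exact ⟨hg, hsupp⟩
    · rw [hcomp]
      exact hnorm (e x)
  exists_bump_norm_grad {f} hf η hη := by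
    obtain ⟨h, hh, hhf⟩ := exists_mem_bumpFunctions_norm_le
      (LieGroupData.contDiff_hgrad (Gd := Gd) (Xb := Xb) hf.1)
      ((Gd.ccData Xb).hasCompactSupport_hgrad hf.2) hη
    have hcomp : (h ∘ e) ∘ e.symm = h := by ext; simp
    refine ⟨h ∘ e, ?_, fun x => hhf (e x)⟩
    change (h ∘ e) ∘ e.symm ∈ bumpFunctions (Euc d)
    rwa [hcomp]

end IsCCChart

theorem CCData.eq_ccData {d s : ℕ} {Gd : LieGroupData d} {Xb : Fin s → Euc d} {S : CCData d s}
    (hG : S.G = Set.univ) (hX : S.X = fun j => Gd.lvf (Xb j)) : S = Gd.ccData Xb := by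
  cases S
  cases hG
  cases hX
  rfl

theorem propertyVStar_lipschitzFree_carnotGroup_general {d s : ℕ} (Gd : LieGroupData d)
    (Xb : Fin s → Euc d) (hgen : Gd.IsBracketGenerating Xb) (S : CCData d s)
    (hG : S.G = Set.univ) (hX : S.X = fun j => Gd.lvf (Xb j)) (hconn : S.Connects)
    {M : Type*} [MetricSpace M] (ι : M → Euc d) (hrep : CCRepresentation S M ι) (o : M)
    {F : Type*} [NormedAddCommGroup F] [NormedSpace ℝ F] [CompleteSpace F]
    (δ : M → F) (hδ : IsLipschitzFree o δ) :
    HasPropertyVStar F := by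
  obtain rfl : S = Gd.ccData Xb := CCData.eq_ccData hG hX
  let e : M ≃ Euc d := Equiv.ofBijective ι ⟨hrep.injective, range_eq_univ.1 hrep.range_eq⟩
  let := Gd.toGroup
  let : Group M := e.group
  have he : IsCCChart Gd Xb e := ⟨fun x y => e.apply_symm_apply _, hrep.dist_eq, hconn⟩
  exact (he.gradientStructure hgen).hasPropertyVStar hδ

/-- **If `G` is a Carnot group (with its Carnot–Carathéodory metric), then `F(G)` has
property (V*).**  Here the Carnot group is given by a Lie group structure on `ℝ^d`
(connected and simply connected) with a stratified Lie algebra `V₁ ⊕ ⋯ ⊕ Vₙ`; the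
vector fields defining the Carnot–Carathéodory metric are the left-invariant extensions
of a basis `X₁, …, X_s` of the first stratum `V₁`, and `M` is the resulting pointed
metric space `(G, d_cc)`. -/
theorem propertyVStar_lipschitzFree_carnotGroup
    {d s n : ℕ} (Gd : LieGroupData d) (strat : Gd.Stratification n)
    (Xb : Fin s → Euc d)
    (hXb_indep : LinearIndependent ℝ Xb)
    (hXb_span : Submodule.span ℝ (Set.range Xb) = strat.V ⟨0, strat.npos⟩)
    (S : CCData d s) (hG : S.G = Set.univ) (hX : S.X = fun j => Gd.lvf (Xb j))
    (hconn : S.Connects)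
    {M : Type*} [MetricSpace M] (ι : M → Euc d) (hrep : CCRepresentation S M ι) (o : M)
    {F : Type*} [NormedAddCommGroup F] [NormedSpace ℝ F] [CompleteSpace F]
    (δ : M → F) (hδ : IsLipschitzFree o δ) :
    HasPropertyVStar F :=
  propertyVStar_lipschitzFree_carnotGroup_general Gd Xb (strat.isBracketGenerating hXb_span) S hG hX
    hconn ι hrep o δ hδ
end
end

section
/- Let P be a standard Banach space property and let M be a complete pointed metric space. Suppose that every x ∈ M has a neighborhood U such that F(cl(U)) satisfies P. Then every compact subset K ⊂ M has a neighborhood U such that F(cl(U)) satisfies P, and moreover F(K) satisfies P. -/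
open Filter Topology Metric Set

noncomputable section

universe v

/-- A Banach space property is standard if it is stable under isomorphism, finite
direct sums, and passing to closed subspaces. -/
def StandardProperty
    (P : ∀ (X : Type v) [NormedAddCommGroup X] [NormedSpace ℝ X], Prop) : Prop :=
  (∀ (X Y : Type v) [NormedAddCommGroup X] [NormedSpace ℝ X]
      [NormedAddCommGroup Y] [NormedSpace ℝ Y], (X ≃L[ℝ] Y) → P X → P Y) ∧
  (∀ (X Y : Type v) [NormedAddCommGroup X] [NormedSpace ℝ X]
      [NormedAddCommGroup Y] [NormedSpace ℝ Y], P X → P Y → P (X × Y)) ∧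
  (∀ (X : Type v) [NormedAddCommGroup X] [NormedSpace ℝ X] (S : Submodule ℝ X),
      IsClosed (S : Set X) → P X → P ↥S)

/-!
A Lipschitz function `ψ` with bounded support acts on `F(M)` through the multiplication operator
`T (δ x) = ψ x • δ x`. Choose `ψ` equal to `1` on a bounded set `S` and to `0` off its
`ε`-thickening `A`. For every set `B`, the operator `T` maps `F(S ∪ B)` into `F(A)` and `1 - T`
maps it into `F(B)`, so `v ↦ (T v, v - T v)` embeds `F(S ∪ B)` into `F(A) × F(B)` as a closed
subspace. Hence every point has a neighbourhood which can be adjoined to an arbitrary set without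
losing `P`, and finitely many of these cover a compact set.
-/

open scoped NNReal

theorem lipschitzWith_smul_of_norm_le {𝕜 X E : Type*} [NormedField 𝕜] [PseudoMetricSpace X]
    [SeminormedAddCommGroup E] [NormedSpace 𝕜 E] {ψ : X → 𝕜} {f : X → E} {L K C R : ℝ≥0}
    (hψ : LipschitzWith L ψ) (hf : LipschitzWith K f) (hψC : ∀ x, ‖ψ x‖ ≤ C)
    (hfR : ∀ x, ψ x ≠ 0 → ‖f x‖ ≤ R) :
    LipschitzWith (L * R + C * K) fun x => ψ x • f x := by
  have of_ne_zero (x y : X) (hx : ψ x ≠ 0) :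
      dist (ψ x • f x) (ψ y • f y) ≤ (L * R + C * K) * dist x y := by
    calc dist (ψ x • f x) (ψ y • f y)
        ≤ dist (ψ x • f x) (ψ y • f x) + dist (ψ y • f x) (ψ y • f y) := dist_triangle ..
      _ = dist (ψ x) (ψ y) * ‖f x‖ + ‖ψ y‖ * dist (f x) (f y) := by
        rw [dist_eq_norm, ← sub_smul, norm_smul, dist_smul₀, dist_eq_norm (ψ x)]
      _ ≤ (L * dist x y) * R + C * (K * dist x y) := by
        gcongr
        exacts [hψ.dist_le_mul x y, hfR x hx, hψC y, hf.dist_le_mul x y]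
      _ = (L * R + C * K) * dist x y := by ring
  refine LipschitzWith.of_dist_le_mul fun x y => ?_
  push_cast
  by_cases hx : ψ x = 0
  · by_cases hy : ψ y = 0
    · simp only [hx, hy, zero_smul, dist_self]
      positivity
    · rw [dist_comm, dist_comm x]
      exact of_ne_zero y x hy
  · exact of_ne_zero x y hx

theorem isClosedEmbedding_of_comp_of_t2 {X Y Z : Type*} [TopologicalSpace X] [TopologicalSpace Y]
    [TopologicalSpace Z] [T2Space Y] {f : X → Y} {g : Y → Z} (hf : Continuous f)
    (hg : Continuous g) (hgf : IsClosedEmbedding (g ∘ f)) : IsClosedEmbedding f :=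
  .of_continuous_injective_isClosedMap hf hgf.injective.of_comp
    (isProperMap_of_comp_of_t2 hf hg hgf.isProperMap).isClosedMap

section FreeSpan

variable {M : Type*} [MetricSpace M] {F : Type*} [NormedAddCommGroup F] [NormedSpace ℝ F]
  {δ : M → F}

theorem isClosed_freeSpan (δ : M → F) (S : Set M) : IsClosed (freeSpan δ S : Set F) :=
  Submodule.isClosed_topologicalClosure _

theorem freeSpan_le {S : Set M} {Z : Submodule ℝ F} (hZ : IsClosed (Z : Set F))
    (h : ∀ x ∈ S, δ x ∈ Z) : freeSpan δ S ≤ Z :=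
  Submodule.topologicalClosure_minimal _ (Submodule.span_le.2 (image_subset_iff.2 h)) hZ

theorem freeSpan_mono {S T : Set M} (h : S ⊆ T) : freeSpan δ S ≤ freeSpan δ T :=
  freeSpan_le (isClosed_freeSpan δ T) fun _ hx => mem_freeSpan δ (h hx)

theorem mapsTo_freeSpan {E : Type*} [NormedAddCommGroup E] [NormedSpace ℝ E] {S : Set M}
    {Z : Submodule ℝ E} (hZ : IsClosed (Z : Set E)) {T : F →L[ℝ] E} (h : ∀ x ∈ S, T (δ x) ∈ Z) :
    MapsTo T (freeSpan δ S) Z :=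
  freeSpan_le (Z := Z.comap T.toLinearMap) (hZ.preimage T.continuous) h

end FreeSpan

namespace IsLipschitzFree

variable {M : Type*} [MetricSpace M] {o : M} {F : Type*} [NormedAddCommGroup F] [NormedSpace ℝ F]
  {δ : M → F}

theorem freeSpan_closure_union_base (hδ : IsLipschitzFree o δ) (S : Set M) :
    freeSpan δ (closure S ∪ {o}) = freeSpan δ S := by
  refine le_antisymm (freeSpan_le (isClosed_freeSpan δ S) ?_)
    (freeSpan_mono (subset_closure.trans subset_union_left))
  rintro x (hx | rfl)
  · exact closure_minimal (fun _ hy => mem_freeSpan δ hy)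
      ((isClosed_freeSpan δ S).preimage hδ.isometry.continuous) hx
  · rw [hδ.map_base]
    exact zero_mem _

section Extension

variable {E : Type*} [NormedAddCommGroup E] [NormedSpace ℝ E] {g : M → E} {C : ℝ≥0}

-- A norming functional for the left-hand side reduces the bound to scalar Lipschitz functions.
theorem norm_linearCombination_le (hδ : IsLipschitzFree o δ) (hg : LipschitzWith C g)
    (hgo : g o = 0) (a : M →₀ ℝ) :
    ‖Finsupp.linearCombination ℝ g a‖ ≤ C * ‖Finsupp.linearCombination ℝ δ a‖ := by
  obtain ⟨f, hf_norm, hf⟩ := exists_dual_vector'' ℝ (Finsupp.linearCombination ℝ g a)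
  have hfg : LipschitzWith C (f ∘ g) :=
    (f.lipschitz.comp hg).weaken (mul_le_of_le_one_left' hf_norm)
  obtain ⟨φ, hφ_norm, hφ⟩ := hδ.lift C (f ∘ g) hfg (by simp [hgo])
  have hfφ : f (Finsupp.linearCombination ℝ g a) = φ (Finsupp.linearCombination ℝ δ a) := by
    simp [Finsupp.linearCombination_apply, Finsupp.sum, map_sum, hφ]
  calc ‖Finsupp.linearCombination ℝ g a‖
      = φ (Finsupp.linearCombination ℝ δ a) := hf.symm.trans hfφ
    _ ≤ ‖φ (Finsupp.linearCombination ℝ δ a)‖ := le_abs_self _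
    _ ≤ C * ‖Finsupp.linearCombination ℝ δ a‖ := φ.le_of_opNorm_le hφ_norm _

theorem exists_continuousLinearMap_extending [CompleteSpace E] (hδ : IsLipschitzFree o δ)
    (hg : LipschitzWith C g) (hgo : g o = 0) : ∃ T : F →L[ℝ] E, ∀ x, T (δ x) = g x := by
  have dense : DenseRange (Finsupp.linearCombination ℝ δ) := by
    simpa only [DenseRange, ← LinearMap.coe_range, Finsupp.range_linearCombination]
      using hδ.dense_span
  refine ⟨(Finsupp.linearCombination ℝ g).extendOfNorm (Finsupp.linearCombination ℝ δ),
    fun x => ?_⟩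
  simpa using LinearMap.extendOfNorm_eq dense ⟨C, hδ.norm_linearCombination_le hg hgo⟩
    (Finsupp.single x 1)

end Extension

theorem exists_thickenedIndicator_smul [CompleteSpace F] (hδ : IsLipschitzFree o δ) {S : Set M}
    (hS : Bornology.IsBounded S) {ε : ℝ} (hε : 0 < ε) :
    ∃ T : F →L[ℝ] F, ∀ x, T (δ x) = (thickenedIndicator hε S x : ℝ) • δ x := by
  obtain ⟨R, hR⟩ := (hδ.isometry.lipschitz.isBounded_image hS.thickening).exists_norm_le
  have hψ := NNReal.isometry_coe.lipschitz.comp (lipschitzWith_thickenedIndicator hε S)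
  have hψ_le (x : M) : ‖(thickenedIndicator hε S x : ℝ)‖ ≤ (1 : ℝ≥0) := by
    simpa using thickenedIndicator_le_one hε S x
  have hδ_le (x : M) (hx : (thickenedIndicator hε S x : ℝ) ≠ 0) : ‖δ x‖ ≤ R.toNNReal := by
    have hxS : x ∈ thickening ε S := by
      by_contra hxS
      exact hx (by simp [thickenedIndicator_zero hε S hxS])
    exact (hR _ (mem_image_of_mem δ hxS)).trans (Real.le_coe_toNNReal R)
  exact hδ.exists_continuousLinearMap_extending
    (lipschitzWith_smul_of_norm_le hψ hδ.isometry.lipschitz hψ_le hδ_le) (by simp [hδ.map_base])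

end IsLipschitzFree

namespace StandardProperty

variable {P : ∀ (X : Type v) [NormedAddCommGroup X] [NormedSpace ℝ X], Prop}

theorem of_isClosedEmbedding (hP : StandardProperty P) {X Y : Type v} [NormedAddCommGroup X]
    [NormedSpace ℝ X] [NormedAddCommGroup Y] [NormedSpace ℝ Y] (f : X →L[ℝ] Y)
    (hf : IsClosedEmbedding f) (hY : P Y) : P X := by
  let e : X ≃L[ℝ] f.toLinearMap.range :=
    { LinearEquiv.ofInjective f.toLinearMap hf.injective with
      continuous_toFun := hf.isEmbedding.toHomeomorph.continuous
      continuous_invFun := hf.isInducing.continuous_iff.2 <| by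
        convert continuous_subtype_val using 1
        exact funext fun y =>
          congrArg Subtype.val ((LinearEquiv.ofInjective f.toLinearMap hf.injective).right_inv y) }
  exact hP.1 _ _ e.symm (hP.2.2 Y _ hf.isClosed_range hY)

variable {F : Type v} [NormedAddCommGroup F] [NormedSpace ℝ F]

theorem mono (hP : StandardProperty P) {A B : Submodule ℝ F} (hA : IsClosed (A : Set F))
    (hAB : A ≤ B) (hB : P B) : P A :=
  hP.of_isClosedEmbedding (A.subtypeL.codRestrict B fun v => hAB v.2)
    (.of_comp .subtypeVal hA.isClosedEmbedding_subtypeVal) hB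

theorem of_mapsTo (hP : StandardProperty P) {A B Z : Submodule ℝ F} (hZ : IsClosed (Z : Set F))
    (hA : P A) (hB : P B) (T : F →L[ℝ] F) (hTA : MapsTo T Z A)
    (hTB : MapsTo (ContinuousLinearMap.id ℝ F - T) Z B) : P Z := by
  let split : Z →L[ℝ] A × B :=
    ((T.comp Z.subtypeL).codRestrict A fun v => hTA v.2).prod
      (((ContinuousLinearMap.id ℝ F - T).comp Z.subtypeL).codRestrict B fun v => hTB v.2)
  let recombine : A × B →L[ℝ] F := A.subtypeL.coprod B.subtypeL
  have recombine_comp_split : recombine ∘ split = Subtype.val :=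
    funext fun v => add_sub_cancel (T v) (v : F)
  have split_isClosedEmbedding : IsClosedEmbedding split :=
    isClosedEmbedding_of_comp_of_t2 split.continuous recombine.continuous
      (recombine_comp_split ▸ hZ.isClosedEmbedding_subtypeVal)
  exact hP.of_isClosedEmbedding split split_isClosedEmbedding (hP.2.1 A B hA hB)

variable [CompleteSpace F] {M : Type*} [MetricSpace M] {o : M} {δ : M → F}

theorem freeSpan_union_of_thickening (hP : StandardProperty P) (hδ : IsLipschitzFree o δ)
    {S B : Set M} (hS : Bornology.IsBounded S) {ε : ℝ} (hε : 0 < ε)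
    (hPS : P (freeSpan δ (thickening ε S))) (hPB : P (freeSpan δ B)) : P (freeSpan δ (S ∪ B)) := by
  obtain ⟨T, hT⟩ := hδ.exists_thickenedIndicator_smul hS hε
  refine hP.of_mapsTo (isClosed_freeSpan δ _) hPS hPB T
    (mapsTo_freeSpan (isClosed_freeSpan δ _) fun x _ => ?_)
    (mapsTo_freeSpan (isClosed_freeSpan δ _) fun x hx => ?_)
  · rw [hT]
    by_cases hxS : x ∈ thickening ε S
    · exact Submodule.smul_mem _ _ (mem_freeSpan δ hxS)
    · simp [thickenedIndicator_zero hε S hxS]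
  · rw [sub_apply, ContinuousLinearMap.id_apply, hT]
    rcases hx with hxS | hxB
    · simp [thickenedIndicator_one hε S hxS]
    · exact sub_mem (mem_freeSpan δ hxB) (Submodule.smul_mem _ _ (mem_freeSpan δ hxB))

theorem exists_mem_nhds_freeSpan_union (hP : StandardProperty P) (hδ : IsLipschitzFree o δ)
    {x : M} {U : Set M} (hU : U ∈ 𝓝 x) (hPU : P (freeSpan δ U)) :
    ∃ V ∈ 𝓝 x, ∀ B : Set M, P (freeSpan δ B) → P (freeSpan δ (V ∪ B)) := by
  obtain ⟨ε, hε, hεU⟩ := Metric.mem_nhds_iff.1 hU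
  have thickening_subset : thickening (ε / 2) (ball x (ε / 2)) ⊆ U :=
    (thickening_ball x (ε / 2) (ε / 2)).trans (by rwa [add_halves])
  exact ⟨ball x (ε / 2), ball_mem_nhds x (half_pos hε), fun B hPB =>
    hP.freeSpan_union_of_thickening hδ isBounded_ball (half_pos hε)
      (hP.mono (isClosed_freeSpan δ _) (freeSpan_mono thickening_subset) hPU) hPB⟩

theorem exists_mem_nhdsSet_freeSpan_union (hP : StandardProperty P) (hδ : IsLipschitzFree o δ)
    {K : Set M} (hK : IsCompact K) (hloc : ∀ x ∈ K, ∃ U ∈ 𝓝 x, P (freeSpan δ U)) :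
    ∃ V ∈ 𝓝ˢ K, ∀ B : Set M, P (freeSpan δ B) → P (freeSpan δ (V ∪ B)) := by
  refine hK.induction_on (p := fun K => ∃ V ∈ 𝓝ˢ K, ∀ B : Set M,
    P (freeSpan δ B) → P (freeSpan δ (V ∪ B))) ?_ ?_ ?_ ?_
  · exact ⟨∅, by simp, fun B hB => by rwa [empty_union]⟩
  · rintro s t hst ⟨V, hV, hPV⟩
    exact ⟨V, nhdsSet_mono hst hV, hPV⟩
  · rintro s t ⟨V, hV, hPV⟩ ⟨W, hW, hPW⟩
    refine ⟨V ∪ W, union_mem_nhdsSet hV hW, fun B hB => ?_⟩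
    rw [union_assoc]
    exact hPV _ (hPW B hB)
  · intro x hx
    obtain ⟨U, hU, hPU⟩ := hloc x hx
    obtain ⟨V, hV, hPV⟩ := hP.exists_mem_nhds_freeSpan_union hδ hU hPU
    exact ⟨interior V, mem_nhdsWithin_of_mem_nhds (interior_mem_nhds.2 hV), V,
      subset_interior_iff_mem_nhdsSet.1 subset_rfl, hPV⟩

end StandardProperty

theorem standardProperty_local_to_compact_general
    (P : ∀ (X : Type v) [NormedAddCommGroup X] [NormedSpace ℝ X], Prop)
    (hP : StandardProperty P)
    {M : Type*} [MetricSpace M] (o : M)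
    {F : Type v} [NormedAddCommGroup F] [NormedSpace ℝ F] [CompleteSpace F]
    (δ : M → F) (hδ : IsLipschitzFree o δ)
    (K : Set M) (hK : IsCompact K) (hK_nonempty : K.Nonempty)
    (hloc : ∀ x ∈ K, ∃ U ∈ 𝓝 x, P ↥(freeSpan δ (closure U ∪ {o}))) :
    (∃ U ∈ 𝓝ˢ K, P ↥(freeSpan δ (closure U ∪ {o}))) ∧
      P ↥(freeSpan δ (K ∪ {o})) := by
  have hloc_freeSpan : ∀ x ∈ K, ∃ U ∈ 𝓝 x, P (freeSpan δ U) := fun x hx => by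
    obtain ⟨U, hU, hPU⟩ := hloc x hx
    exact ⟨U, hU, hδ.freeSpan_closure_union_base U ▸ hPU⟩
  obtain ⟨V, hV, hPV⟩ := hP.exists_mem_nhdsSet_freeSpan_union hδ hK hloc_freeSpan
  obtain ⟨x, hx⟩ := hK_nonempty
  obtain ⟨B, -, hPB⟩ := hloc_freeSpan x hx
  have hPVB : P (freeSpan δ (closure (V ∪ B) ∪ {o})) := by
    rw [hδ.freeSpan_closure_union_base]
    exact hPV B hPB
  have hK_subset : K ⊆ closure (V ∪ B) :=
    (subset_of_mem_nhdsSet hV).trans (subset_union_left.trans subset_closure)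
  exact ⟨⟨V ∪ B, mem_of_superset hV subset_union_left, hPVB⟩,
    hP.mono (isClosed_freeSpan δ _) (freeSpan_mono (union_subset_union_left _ hK_subset)) hPVB⟩

/-- Let `P` be a standard Banach space property and `M` a complete pointed metric space.
If every point of `M` has a neighborhood `U` such that `F(cl(U))` satisfies `P`, then
every compact `K ⊆ M` has a neighborhood `U` such that `F(cl(U))` satisfies `P`,
and `F(K)` satisfies `P` as well. -/
theorem standardProperty_local_to_compact
    (P : ∀ (X : Type v) [NormedAddCommGroup X] [NormedSpace ℝ X], Prop)
    (hP : StandardProperty P)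
    {M : Type*} [MetricSpace M] [CompleteSpace M] (o : M)
    {F : Type v} [NormedAddCommGroup F] [NormedSpace ℝ F] [CompleteSpace F]
    (δ : M → F) (hδ : IsLipschitzFree o δ)
    (hloc : ∀ x : M, ∃ U ∈ 𝓝 x, P ↥(freeSpan δ (closure U ∪ {o})))
    (K : Set M) (hK : IsCompact K) :
    (∃ U ∈ 𝓝ˢ K, P ↥(freeSpan δ (closure U ∪ {o}))) ∧
      P ↥(freeSpan δ (K ∪ {o})) := by
  obtain ⟨⟨U, hU, hPU⟩, hPK⟩ := standardProperty_local_to_compact_general P hP o δ hδ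
    (insert o K) (hK.insert o) (insert_nonempty o K) fun x _ => hloc x
  exact ⟨⟨U, nhdsSet_mono (subset_insert o K) hU, hPU⟩, by
    rwa [union_singleton, insert_idem, ← union_singleton] at hPK⟩
end
end
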